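/- Let X be a geodesic metric space that is Gromov hyperbolic. Then there exists a constant C > 0 (depending only on X) such that every Lipschitz loop γ:[0,1]→X with γ(0)=γ(1) bounds a singular Lipschitz disc of area at most C·Lip(γ) in L^∞(X), where Lip(γ) denotes a Lipschitz constant of γ. In particular, loops in X admit fillings in L^∞(X) whose area is linear in the length of the loop. -/

import Mathlib

open scoped NNReal ENNReal
open MeasureTheory Filter

universe u v

namespace SharpIsop

/-- The closed unit disc `D² ⊂ ℝ²`. -/
def D2 : Set (ℝ × ℝ) := {p | p.1 ^ 2 + p.2 ^ 2 ≤ 1}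

/-- The length (total variation over `[0,1]`) of a curve `γ : [0,1] → X`. -/
noncomputable def loopLength {X : Type u} [PseudoEMetricSpace X] (γ : ℝ → X) : ℝ :=
  (eVariationOn γ (Set.Icc 0 1)).toReal

/-- A Lipschitz loop in `X`: a Lipschitz map `γ : [0,1] → X` with `γ 0 = γ 1`. -/
def IsLipLoop {X : Type u} [PseudoEMetricSpace X] (γ : ℝ → X) : Prop :=
  (∃ K : ℝ≥0, LipschitzOnWith K γ (Set.Icc 0 1)) ∧ γ 0 = γ 1

/-- The metric (directional) derivative of `φ : ℝ² → X` at `x` in direction `v`,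
defined via a `limsup` so that it is everywhere defined (and agrees a.e. with the
limit when the latter exists). -/
noncomputable def mder {X : Type u} [PseudoMetricSpace X] (φ : ℝ × ℝ → X)
    (x v : ℝ × ℝ) : ℝ :=
  Filter.limsup (fun r : ℝ => dist (φ (x + r • v)) (φ x) / r) (nhdsWithin 0 (Set.Ioi 0))

/-- The Jacobian of a (semi)norm `s` on `ℝ²`:  `π / Leb²({v : s v ≤ 1})` if this set
has finite measure, `0` otherwise. -/
noncomputable def jac2 (s : ℝ × ℝ → ℝ) : ℝ :=
  if volume {v : ℝ × ℝ | s v ≤ 1} < ⊤ then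
    Real.pi / (volume {v : ℝ × ℝ | s v ≤ 1}).toReal
  else 0

/-- The parametrized (Hausdorff) area of a map `φ : D² → X`. -/
noncomputable def lipArea {X : Type u} [PseudoMetricSpace X] (φ : ℝ × ℝ → X) : ℝ :=
  ∫ x in D2, jac2 (mder φ x)

/-- `φ : D² → X` is a singular Lipschitz disc bounding the loop `γ : [0,1] → X`. -/
def BoundsLoop {X : Type u} [PseudoMetricSpace X] (φ : ℝ × ℝ → X) (γ : ℝ → X) : Prop :=
  (∃ K : ℝ≥0, LipschitzOnWith K φ D2) ∧
    ∀ s ∈ Set.Icc (0:ℝ) 1, φ (Real.cos (2 * Real.pi * s), Real.sin (2 * Real.pi * s)) = γ s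

/-- `g : [0, d x y] → X` is a geodesic from `x` to `y`. -/
def IsGeodesicSeg {X : Type u} [MetricSpace X] (x y : X) (g : ℝ → X) : Prop :=
  g 0 = x ∧ g (dist x y) = y ∧
    ∀ s ∈ Set.Icc (0:ℝ) (dist x y), ∀ t ∈ Set.Icc (0:ℝ) (dist x y),
      dist (g s) (g t) = |s - t|

/-- A geodesic metric space: any two points are joined by a geodesic. -/
def GeodesicSpace (X : Type u) [MetricSpace X] : Prop :=
  ∀ x y : X, ∃ g : ℝ → X, IsGeodesicSeg x y g

/-- Gromov hyperbolicity via δ-slim geodesic triangles. -/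
def GromovHyperbolic (X : Type u) [MetricSpace X] : Prop :=
  ∃ δ : ℝ, 0 ≤ δ ∧
    ∀ x y z : X, ∀ gxy gyz gzx : ℝ → X,
      IsGeodesicSeg x y gxy → IsGeodesicSeg y z gyz → IsGeodesicSeg z x gzx →
      ∀ s ∈ Set.Icc (0:ℝ) (dist x y),
        ∃ p ∈ gyz '' Set.Icc (0:ℝ) (dist y z) ∪ gzx '' Set.Icc (0:ℝ) (dist z x),
          dist (gxy s) p ≤ δ

/-- `L^∞(X)`: the Banach space of bounded real functions on `X` with sup norm. -/
abbrev Linfty (X : Type u) : Type u := lp (fun _ : X => ℝ) ⊤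

/-- The Kuratowski embedding `x ↦ d(x,·) − d(x₀,·)` of `X` into `L^∞(X)`. -/
noncomputable def kuratowski (X : Type u) [MetricSpace X] (x₀ : X) (x : X) : Linfty X :=
  ⟨fun y => dist x y - dist x₀ y, memℓp_infty ⟨dist x x₀, by
    rintro t ⟨y, rfl⟩
    simpa [Real.norm_eq_abs] using abs_dist_sub_le x x₀ y⟩⟩

/-- `Y` admits a quadratic isoperimetric inequality for curves (with singular
Lipschitz discs as fillings). -/
def QuadIsopSpace (Y : Type u) [MetricSpace Y] : Prop :=
  ∃ C > (0:ℝ), ∀ c : ℝ → Y, IsLipLoop c →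
    ∃ φ : ℝ × ℝ → Y, BoundsLoop φ c ∧ lipArea φ ≤ C * (loopLength c) ^ 2

/-- `X` admits a disc-thickening with a quadratic isoperimetric inequality. -/
def HasDiscThickeningQII (X : Type u) [MetricSpace X] : Prop :=
  ∃ (X' : Type u) (m : MetricSpace X') (ι : X → X'),
    letI := m
    CompleteSpace X' ∧ Isometry ι ∧
      EMetric.hausdorffEdist (Set.range ι) (Set.univ : Set X') ≠ ⊤ ∧
      QuadIsopSpace X'

/-!
Fix `k = 4 δ + 1` and the image of a loop under a `1`-Lipschitz map into a normed space. If the loop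
stays within distance `k` of its base point, the cone over it has area at most a multiple of `k`
times its length. Otherwise let `m` be the point of the loop farthest from the base point, and let
`x` and `y` lie at arc length `k` before and after it. Both are at most as far from the base point
as `m` is, so slim triangles force the midpoint of `x` and `y` to be close to `m`, and hence
`d (x, y) ≤ k + 4 δ = 2 k - 1`. Replacing the arc from `x` to `y` by a geodesic shortens the loop by
at least `1`, and in the normed space the straight homotopy between the two loops sweeps out an area
of order `k ^ 2`. After at most as many steps as the length of the loop, the first case is reached.

Fillings are built on the unit disc of `ℂ`: a filling of the shortened loop is put on the disc of
radius `1 / 2`, and the homotopy on the remaining annulus. Its Jacobian is estimated in polar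
coordinates, by the angular speed of the two loops times their distance.
-/

section Area

open Set Topology Metric

variable {V W Y : Type*} [PseudoMetricSpace Y]

/-- The upper one-sided metric derivative of `Φ` at `z` in direction `v`. For maps on `ℝ × ℝ`
this is `mder`; a general domain makes it possible to work on `ℂ` in polar coordinates. -/
noncomputable def metricDeriv [AddCommGroup V] [Module ℝ V] (Φ : V → Y) (z v : V) : ℝ :=
  limsup (fun r : ℝ => dist (Φ (z + r • v)) (Φ z) / r) (𝓝[>] 0)

/-- The Hausdorff Jacobian of a map on a real plane, `π` over the volume of the unit ball of the
metric derivative. Division in `ℝ≥0∞` gives `0` for a unit ball of infinite volume, as in `jac2`,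
and `∞` rather than `0` for one of volume zero. -/
noncomputable def jacobian [AddCommGroup V] [Module ℝ V] [MeasureSpace V] (Φ : V → Y) (z : V) :
    ℝ≥0∞ :=
  ENNReal.ofReal Real.pi / volume {v | metricDeriv Φ z v ≤ 1}

/-- The Hausdorff area of the restriction of `Φ` to `s`, with values in `ℝ≥0∞`. -/
noncomputable def area [AddCommGroup V] [Module ℝ V] [MeasureSpace V] (Φ : V → Y) (s : Set V) :
    ℝ≥0∞ :=
  ∫⁻ z in s, jacobian Φ z

lemma metricDeriv_congr [AddCommGroup V] [Module ℝ V] [TopologicalSpace V] [ContinuousAdd V]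
    [ContinuousSMul ℝ V] {Φ Ψ : V → Y} {z : V} (h : Φ =ᶠ[𝓝 z] Ψ) :
    metricDeriv Φ z = metricDeriv Ψ z := by
  funext v
  have hline : Tendsto (fun r : ℝ => z + r • v) (𝓝[>] 0) (𝓝 z) :=
    ((by fun_prop : Continuous fun r : ℝ => z + r • v).tendsto' 0 z (by simp)).mono_left
      nhdsWithin_le_nhds
  refine limsup_congr ?_
  filter_upwards [hline.eventually h] with r hr
  rw [hr, h.self_of_nhds]

lemma jacobian_congr [AddCommGroup V] [Module ℝ V] [TopologicalSpace V] [ContinuousAdd V]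
    [ContinuousSMul ℝ V] [MeasureSpace V] {Φ Ψ : V → Y} {z : V} (h : Φ =ᶠ[𝓝 z] Ψ) :
    jacobian Φ z = jacobian Ψ z := by
  rw [jacobian, jacobian, metricDeriv_congr h]

lemma metricDeriv_comp_linear [AddCommGroup V] [Module ℝ V] [AddCommGroup W] [Module ℝ W]
    (Φ : W → Y) (L : V →ₗ[ℝ] W) (z v : V) :
    metricDeriv (Φ ∘ L) z v = metricDeriv Φ (L z) (L v) := by
  simp only [metricDeriv, Function.comp_apply, map_add, map_smul]

/-- The Jacobian factor of `L` cancels against the change of variables. -/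
lemma area_comp_continuousLinearEquiv
    [NormedAddCommGroup V] [NormedSpace ℝ V] [FiniteDimensional ℝ V] [MeasureSpace V] [BorelSpace V]
    [(volume : Measure V).IsAddHaarMeasure]
    [NormedAddCommGroup W] [NormedSpace ℝ W] [MeasureSpace W] [BorelSpace W]
    [(volume : Measure W).IsAddHaarMeasure]
    (Φ : W → Y) (L : V ≃L[ℝ] W) (s : Set W) : area (Φ ∘ L) (L ⁻¹' s) = area Φ s := by
  have : FiniteDimensional ℝ W := L.toLinearEquiv.finiteDimensional
  let e : V ≃ᵐ W := L.toHomeomorph.toMeasurableEquiv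
  obtain ⟨c, hc0, hctop, hc⟩ : ∃ c : ℝ≥0∞, c ≠ 0 ∧ c ≠ ⊤ ∧
      Measure.map L volume = c • (volume : Measure W) := by
    have : (Measure.map L volume).IsAddHaarMeasure := L.isAddHaarMeasure_map volume
    exact ⟨Measure.addHaarScalarFactor (Measure.map L volume) volume,
      by exact_mod_cast (Measure.addHaarScalarFactor_pos_of_isAddHaarMeasure _ _).ne',
      ENNReal.coe_ne_top, Measure.isAddLeftInvariant_eq_smul _ _⟩
  have hjac (z : V) : jacobian (Φ ∘ L) z = c⁻¹ * jacobian Φ (L z) := by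
    have hball : volume {v | metricDeriv (Φ ∘ L) z v ≤ 1} =
        c * volume {w | metricDeriv Φ (L z) w ≤ 1} := by
      rw [← smul_eq_mul, ← Measure.smul_apply, ← hc]
      refine Eq.trans (congrArg _ ?_) (e.map_apply _).symm
      ext v
      exact iff_of_eq (congrArg (· ≤ 1) (metricDeriv_comp_linear Φ L.toLinearMap z v))
    rw [jacobian, jacobian, hball, div_eq_mul_inv, ENNReal.mul_inv (.inl hc0) (.inl hctop),
      div_eq_mul_inv, mul_left_comm]
  have hL : MeasurePreserving L volume (c • (volume : Measure W)) :=
    ⟨L.continuous.measurable, hc⟩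
  calc area (Φ ∘ L) (L ⁻¹' s) = ∫⁻ z in L ⁻¹' s, c⁻¹ * jacobian Φ (L z) := by
        simp only [area, hjac]
    _ = c⁻¹ * (c * area Φ s) := by
        rw [lintegral_const_mul' _ _ (ENNReal.inv_ne_top.2 hc0),
          hL.setLIntegral_comp_preimage_emb e.measurableEmbedding, Measure.restrict_smul,
          lintegral_smul_measure, smul_eq_mul, area]
    _ = area Φ s := by rw [← mul_assoc, ENNReal.inv_mul_cancel hc0 hctop, one_mul]

lemma area_const [NormedAddCommGroup V] [NormedSpace ℝ V] [Nontrivial V] [FiniteDimensional ℝ V]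
    [MeasureSpace V] [BorelSpace V] [(volume : Measure V).IsAddHaarMeasure] (y : Y) (s : Set V) :
    area (fun _ : V => y) s = 0 := by
  have : NoncompactSpace V := NormedSpace.noncompactSpace ℝ V
  have hderiv (z v : V) : metricDeriv (fun _ : V => y) z v = 0 := by simp [metricDeriv]
  simp [area, jacobian, hderiv]

lemma lipArea_le_toReal_area {Y : Type u} [PseudoMetricSpace Y] {φ : ℝ × ℝ → Y}
    (h : area φ D2 ≠ ⊤) : lipArea φ ≤ (area φ D2).toReal := by
  have hjac (z : ℝ × ℝ) : ‖jac2 (mder φ z)‖ₑ ≤ jacobian φ z := by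
    have : mder φ z = metricDeriv φ z := rfl
    rw [jac2, jacobian, this]
    split_ifs with hfin
    · rw [Real.enorm_of_nonneg (by positivity)]
      exact (ENNReal.ofReal_div_le ENNReal.toReal_nonneg).trans_eq
        (by rw [ENNReal.ofReal_toReal hfin.ne])
    · simp
  refine (Real.le_norm_self _).trans ?_
  rw [← toReal_enorm]
  exact ENNReal.toReal_mono h
    ((enorm_integral_le_lintegral_enorm _).trans (lintegral_mono fun z => hjac z))

end Area

section PolarCoordinates

open Set Topology Metric Complex

variable {Y : Type*} [PseudoMetricSpace Y]

lemma volume_abs_re_le_abs_im_le {a b : ℝ} (ha : 0 ≤ a) :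
    volume {y : ℂ | |y.re| ≤ a ∧ |y.im| ≤ b} = ENNReal.ofReal (4 * a * b) := by
  have hrect : {y : ℂ | |y.re| ≤ a ∧ |y.im| ≤ b} =
      measurableEquivRealProd ⁻¹' (Icc (-a) a ×ˢ Icc (-b) b) := by
    ext y
    simp only [mem_ofPred_eq, mem_preimage, measurableEquivRealProd_apply, mem_prod, mem_Icc,
      abs_le]
  rw [hrect, volume_preserving_equiv_real_prod.measure_preimage_equiv, Measure.volume_eq_prod,
    Measure.prod_prod, Real.volume_Icc, Real.volume_Icc, ← ENNReal.ofReal_mul (by linarith)]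
  ring_nf

lemma volume_preimage_div {z : ℂ} (hz : z ≠ 0) (s : Set ℂ) :
    volume ((· / z) ⁻¹' s) = ENNReal.ofReal (‖z‖ ^ 2) * volume s := by
  have hdet : LinearMap.det (Algebra.lmul ℝ ℂ z⁻¹) = (‖z‖ ^ 2)⁻¹ := by
    rw [← Algebra.norm_apply, Algebra.norm_complex_apply, map_inv₀, normSq_eq_norm_sq]
  have hpre : (· / z) ⁻¹' s = Algebra.lmul ℝ ℂ z⁻¹ ⁻¹' s := by
    ext v
    simp [div_eq_inv_mul]
  rw [hpre, Measure.addHaar_preimage_linearMap volume (by rw [hdet]; positivity), hdet, inv_inv,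
    abs_of_nonneg (by positivity)]

/-- The rectangle `|Re (v / z)| ≤ 1 / (2 * b * ‖z‖)`, `|Im (v / z)| ≤ 1 / (2 * a)` lies in the unit
ball of the metric derivative. -/
lemma jacobian_le_of_metricDeriv_le {Φ : ℂ → Y} {z : ℂ} (hz : z ≠ 0) {a b : ℝ} (ha : 0 < a)
    (hb : 0 < b)
    (h : ∀ v, metricDeriv Φ z v ≤ a * |(v / z).im| + b * (‖z‖ * |(v / z).re|)) :
    jacobian Φ z ≤ ENNReal.ofReal (Real.pi * a * b / ‖z‖) := by
  have hsub : (· / z) ⁻¹' {y : ℂ | |y.re| ≤ 1 / (2 * b * ‖z‖) ∧ |y.im| ≤ 1 / (2 * a)} ⊆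
      {v | metricDeriv Φ z v ≤ 1} := by
    rintro v ⟨hre, him⟩
    calc metricDeriv Φ z v ≤ a * |(v / z).im| + b * (‖z‖ * |(v / z).re|) := h v
      _ ≤ a * (1 / (2 * a)) + b * (‖z‖ * (1 / (2 * b * ‖z‖))) := by gcongr
      _ = 1 := by field_simp; norm_num
  have hvol := measure_mono (μ := volume) hsub
  rw [volume_preimage_div hz, volume_abs_re_le_abs_im_le (by positivity),
    ← ENNReal.ofReal_mul (by positivity)] at hvol
  calc jacobian Φ z ≤ ENNReal.ofReal Real.pi /
        ENNReal.ofReal (‖z‖ ^ 2 * (4 * (1 / (2 * b * ‖z‖)) * (1 / (2 * a)))) :=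
        ENNReal.div_le_div_left hvol _
    _ = ENNReal.ofReal (Real.pi * a * b / ‖z‖) := by
        rw [← ENNReal.ofReal_div_of_pos (by positivity)]
        congr 1
        field_simp
        norm_num

lemma hasDerivAt_arg_comp {c : ℝ → ℂ} {c' : ℂ} {t : ℝ} (hc : HasDerivAt c c' t)
    (ht : c t ∈ slitPlane) : HasDerivAt (fun s => arg (c s)) (c' / c t).im t := by
  simpa only [Function.comp_def, imCLM_apply, log_im] using
    imCLM.hasFDerivAt.comp_hasDerivAt t (hc.clog_real ht)

lemma hasDerivAt_norm_comp {c : ℝ → ℂ} {c' : ℂ} {t : ℝ} (hc : HasDerivAt c c' t)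
    (ht : c t ∈ slitPlane) : HasDerivAt (fun s => ‖c s‖) (‖c t‖ * (c' / c t).re) t := by
  have hne : c t ≠ 0 := slitPlane_ne_zero ht
  have hlog : HasDerivAt (fun s => Real.log ‖c s‖) (c' / c t).re t := by
    simpa only [Function.comp_def, reCLM_apply, log_re] using
      reCLM.hasFDerivAt.comp_hasDerivAt t (hc.clog_real ht)
  have hexp := hlog.exp
  rw [Real.exp_log (norm_pos_iff.2 hne)] at hexp
  refine hexp.congr_of_eventuallyEq ?_
  filter_upwards [hc.continuousAt.eventually_ne hne] with s hs
  exact (Real.exp_log (norm_pos_iff.2 hs)).symm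

lemma tendsto_abs_sub_div {f : ℝ → ℝ} {f' : ℝ} (hf : HasDerivAt f f' 0) :
    Tendsto (fun r => |f r - f 0| / r) (𝓝[>] 0) (𝓝 |f'|) := by
  refine ((hf.tendsto_slope.mono_left (nhdsGT_le_nhdsNE 0)).abs).congr' ?_
  filter_upwards [self_mem_nhdsWithin] with r hr
  rw [slope_def_field, sub_zero, abs_div, abs_of_pos (mem_Ioi.1 hr)]

lemma metricDeriv_le_of_polar {Φ : ℂ → Y} {z : ℂ} (hz : z ∈ slitPlane) {a b : ℝ}
    (h : ∀ᶠ w in 𝓝 z, dist (Φ w) (Φ z) ≤ a * |arg w - arg z| + b * |‖w‖ - ‖z‖|) (v : ℂ) :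
    metricDeriv Φ z v ≤ a * |(v / z).im| + b * (‖z‖ * |(v / z).re|) := by
  have hline : HasDerivAt (fun r : ℝ => z + r • v) v 0 := by
    simpa using ((hasDerivAt_id (0 : ℝ)).smul_const v).const_add z
  have hz0 : z + (0 : ℝ) • v = z := by simp
  have harg : Tendsto (fun r : ℝ => |arg (z + r • v) - arg z| / r) (𝓝[>] 0)
      (𝓝 |(v / z).im|) := by
    simpa only [hz0] using tendsto_abs_sub_div (hasDerivAt_arg_comp hline (hz0.symm ▸ hz))
  have hnorm : Tendsto (fun r : ℝ => |‖z + r • v‖ - ‖z‖| / r) (𝓝[>] 0)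
      (𝓝 (‖z‖ * |(v / z).re|)) := by
    simpa only [hz0, abs_mul, abs_norm] using
      tendsto_abs_sub_div (hasDerivAt_norm_comp hline (hz0.symm ▸ hz))
  have hlim := (harg.const_mul a).add (hnorm.const_mul b)
  have hle : ∀ᶠ r in 𝓝[>] (0 : ℝ), dist (Φ (z + r • v)) (Φ z) / r ≤
      a * (|arg (z + r • v) - arg z| / r) + b * (|‖z + r • v‖ - ‖z‖| / r) := by
    have hto : Tendsto (fun r : ℝ => z + r • v) (𝓝[>] 0) (𝓝 z) :=
      ((by fun_prop : Continuous fun r : ℝ => z + r • v).tendsto' 0 z hz0).mono_left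
        nhdsWithin_le_nhds
    filter_upwards [hto.eventually h, self_mem_nhdsWithin] with r hr hpos
    rw [← mul_div_assoc, ← mul_div_assoc, ← add_div]
    exact div_le_div_of_nonneg_right hr (mem_Ioi.1 hpos).le
  refine (limsup_le_limsup hle ?_ hlim.isBoundedUnder_le).trans_eq hlim.limsup_eq
  refine IsCoboundedUnder.of_frequently_ge (a := 0) (Eventually.frequently ?_)
  filter_upwards [self_mem_nhdsWithin] with r hr
  exact div_nonneg dist_nonneg (mem_Ioi.1 hr).le

lemma jacobian_le_of_polar {Φ : ℂ → Y} {z : ℂ} (hz : z ∈ slitPlane) {a b : ℝ} (ha : 0 ≤ a)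
    (hb : 0 ≤ b)
    (h : ∀ ε > 0, ∀ᶠ w in 𝓝 z,
      dist (Φ w) (Φ z) ≤ (a + ε) * |arg w - arg z| + b * |‖w‖ - ‖z‖|) :
    jacobian Φ z ≤ ENNReal.ofReal (Real.pi * a * b / ‖z‖) := by
  have hlim : Tendsto (fun ε : ℝ => ENNReal.ofReal (Real.pi * (a + ε) * (b + ε) / ‖z‖)) (𝓝[>] 0)
      (𝓝 (ENNReal.ofReal (Real.pi * a * b / ‖z‖))) :=
    ENNReal.tendsto_ofReal (((by fun_prop : Continuous fun ε : ℝ =>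
      Real.pi * (a + ε) * (b + ε) / ‖z‖).tendsto' 0 _ (by simp)).mono_left nhdsWithin_le_nhds)
  refine ge_of_tendsto hlim ?_
  filter_upwards [self_mem_nhdsWithin] with ε hε
  have hε : 0 < ε := hε
  refine jacobian_le_of_metricDeriv_le (slitPlane_ne_zero hz) (by linarith) (by linarith)
    (metricDeriv_le_of_polar hz ?_)
  filter_upwards [h ε hε] with w hw
  refine hw.trans ?_
  gcongr
  linarith

lemma polarCoord_symm_mul_indicator_annulus_le {J : ℂ → ℝ≥0∞} {B : ℝ≥0∞} {r R ρ θ : ℝ}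
    (hρ : 0 < ρ) (hρR : ρ ≠ R) (hθ : θ ∈ Ioo (-Real.pi) Real.pi)
    (hJ : ∀ z ∈ slitPlane, arg z = θ → ‖z‖ ∈ Ioo r R → ENNReal.ofReal ‖z‖ * J z ≤ B) :
    ENNReal.ofReal ρ * (closedBall (0 : ℂ) R \ closedBall 0 r).indicator J
      (Complex.polarCoord.symm (ρ, θ)) ≤ (Ioo r R).indicator 1 ρ * B := by
  by_cases hz : Complex.polarCoord.symm (ρ, θ) ∈ closedBall (0 : ℂ) R \ closedBall 0 r
  · have hnorm : ‖Complex.polarCoord.symm (ρ, θ)‖ = ρ := by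
      rw [norm_polarCoord_symm, abs_of_pos hρ]
    have harg : arg (Complex.polarCoord.symm (ρ, θ)) = θ := by
      rw [Complex.polarCoord_symm_apply, ofReal_cos, ofReal_sin]
      exact arg_mul_cos_add_sin_mul_I hρ (Ioo_subset_Ioc_self hθ)
    have hρ_mem : ρ ∈ Ioo r R := by
      rw [Set.mem_sdiff, mem_closedBall_zero_iff, mem_closedBall_zero_iff, hnorm, not_le] at hz
      exact ⟨hz.2, lt_of_le_of_ne hz.1 hρR⟩
    have hslit : Complex.polarCoord.symm (ρ, θ) ∈ slitPlane :=
      mem_slitPlane_iff_arg.2 ⟨harg.trans_ne hθ.2.ne, norm_pos_iff.1 (hnorm.symm ▸ hρ)⟩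
    rw [indicator_of_mem hz, indicator_of_mem hρ_mem, Pi.one_apply, one_mul]
    simpa only [hnorm] using hJ _ hslit harg (hnorm.symm ▸ hρ_mem)
  · rw [indicator_of_notMem hz, mul_zero]
    exact zero_le

/-- Outside the circles of radius `r` and `R`, which are null sets, polar coordinates turn the
annulus into the product of `Ioo r R` and `Ioo (-π) π`. -/
lemma setLIntegral_annulus_le {J : ℂ → ℝ≥0∞} {h : ℝ → ℝ≥0∞} (hh : Measurable h) {r R : ℝ}
    (hJ : ∀ᵐ θ, θ ∈ Ioo (-Real.pi) Real.pi → ∀ z ∈ slitPlane, arg z = θ → ‖z‖ ∈ Ioo r R →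
      ENNReal.ofReal ‖z‖ * J z ≤ h θ) :
    ∫⁻ z in closedBall 0 R \ closedBall 0 r, J z ≤
      ENNReal.ofReal (R - r) * ∫⁻ θ in Ioo (-Real.pi) Real.pi, h θ := by
  have hmeas : MeasurableSet (closedBall (0 : ℂ) R \ closedBall 0 r) :=
    measurableSet_closedBall.diff measurableSet_closedBall
  have hbound : ∀ᵐ p ∂(volume.restrict (Ioi (0 : ℝ))).prod
      (volume.restrict (Ioo (-Real.pi) Real.pi)),
      ENNReal.ofReal p.1 • (closedBall (0 : ℂ) R \ closedBall 0 r).indicator J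
        (Complex.polarCoord.symm p) ≤ (Ioo r R).indicator 1 p.1 * h p.2 := by
    have hradius : ∀ᵐ ρ ∂volume.restrict (Ioi (0 : ℝ)), 0 < ρ ∧ ρ ≠ R :=
      (ae_restrict_mem measurableSet_Ioi).and (ae_restrict_of_ae (Measure.ae_ne volume R))
    have hangle := ((ae_restrict_iff' measurableSet_Ioo).2 hJ).and
      (ae_restrict_mem (measurableSet_Ioo (a := -Real.pi) (b := Real.pi)))
    filter_upwards [Measure.quasiMeasurePreserving_fst.ae hradius,
      Measure.quasiMeasurePreserving_snd.ae hangle] with ⟨ρ, θ⟩ ⟨hρ, hρR⟩ ⟨hθJ, hθ⟩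
    exact polarCoord_symm_mul_indicator_annulus_le hρ hρR hθ hθJ
  rw [← lintegral_indicator hmeas, ← Complex.lintegral_comp_polarCoord_symm, polarCoord_target,
    Measure.volume_eq_prod, ← Measure.prod_restrict]
  refine (lintegral_mono_ae hbound).trans ?_
  rw [lintegral_prod_mul (measurable_one.indicator measurableSet_Ioo).aemeasurable hh.aemeasurable]
  gcongr
  rw [lintegral_indicator_one measurableSet_Ioo, ← Real.volume_Ioo]
  exact Measure.restrict_apply_le _ _

end PolarCoordinates

section Curves

open Set Topology

variable {Y : Type*} [PseudoMetricSpace Y]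

/-- The upper metric speed of the curve `c` at time `t` is at most `q`. -/
def HasSpeedLE (c : ℝ → Y) (q t : ℝ) : Prop :=
  ∀ ε > 0, ∀ᶠ s in 𝓝 t, dist (c s) (c t) ≤ (q + ε) * |s - t|

lemma HasSpeedLE.mono {c : ℝ → Y} {p q t : ℝ} (h : HasSpeedLE c p t) (hpq : p ≤ q) :
    HasSpeedLE c q t := fun ε hε => (h ε hε).mono fun s hs => hs.trans (by gcongr)

lemma hasSpeedLE_of_lipschitzOnWith {c : ℝ → Y} {K : ℝ≥0} {S : Set ℝ} {t : ℝ}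
    (h : LipschitzOnWith K c S) (hS : S ∈ 𝓝 t) : HasSpeedLE c K t := fun ε hε => by
  filter_upwards [hS] with s hs
  refine (h.dist_le_mul s hs t (mem_of_mem_nhds hS)).trans ?_
  rw [Real.dist_eq]
  gcongr
  linarith

lemma dist_le_abs_variationOnFromTo_sub {c : ℝ → Y} {S : Set ℝ}
    (hc : LocallyBoundedVariationOn c S) {a s t : ℝ} (ha : a ∈ S) (hs : s ∈ S) (ht : t ∈ S) :
    dist (c s) (c t) ≤ |variationOnFromTo c S a s - variationOnFromTo c S a t| := by
  wlog hst : t ≤ s generalizing s t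
  · rw [dist_comm, abs_sub_comm]
    exact this ht hs (le_of_not_ge hst)
  rw [variationOnFromTo.sub_right hc ha hs ht, variationOnFromTo.eq_of_le c S hst,
    ENNReal.abs_toReal, dist_edist]
  exact ENNReal.toReal_mono (hc t s ht hs)
    (eVariationOn.edist_le c ⟨hs, hst, le_rfl⟩ ⟨ht, le_rfl, hst⟩)

lemma lintegral_enorm_deriv_le_of_monotoneOn {f : ℝ → ℝ} {a b : ℝ} (hab : a ≤ b)
    (hf : MonotoneOn f (Icc a b)) :
    ∫⁻ t in Ioo a b, ‖deriv f t‖ₑ ≤ ENNReal.ofReal (f b - f a) := by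
  obtain ⟨G, hlim, hmeas, hle⟩ := hf.exists_tendsto_deriv_liminf_lintegral_enorm_le hab
  exact (lintegral_mono_set Ioo_subset_Icc_self).trans
    ((lintegral_enorm_le_liminf_of_tendsto hlim fun n => (hmeas n).enorm).trans hle)

/-- The speed is the derivative of the arc length. -/
lemma exists_hasSpeedLE_lintegral_le {c : ℝ → Y} {a b : ℝ} (hab : a ≤ b)
    (hc : BoundedVariationOn c (Icc a b)) :
    ∃ q : ℝ → ℝ, Measurable q ∧ (∀ t, 0 ≤ q t) ∧
      (∀ᵐ t, t ∈ Ioo a b → HasSpeedLE c (q t) t) ∧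
      ∫⁻ t in Ioo a b, ENNReal.ofReal (q t) ≤ eVariationOn c (Icc a b) := by
  set v := variationOnFromTo c (Icc a b) a
  have hloc := hc.locallyBoundedVariationOn
  have ha : a ∈ Icc a b := left_mem_Icc.2 hab
  have hv : MonotoneOn v (Icc a b) := variationOnFromTo.monotoneOn hloc ha
  refine ⟨fun t => |deriv v t|, (measurable_deriv v).abs, fun t => abs_nonneg _, ?_, ?_⟩
  · filter_upwards [hv.ae_differentiableWithinAt_of_mem] with t hdiff ht ε hε
    have hnhds : Icc a b ∈ 𝓝 t := Icc_mem_nhds ht.1 ht.2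
    have hderiv := ((hdiff (Ioo_subset_Icc_self ht)).differentiableAt hnhds).hasDerivAt
    filter_upwards [hnhds, hderiv.isLittleO.def hε] with s hs hlin
    calc dist (c s) (c t) ≤ |v s - v t| :=
          dist_le_abs_variationOnFromTo_sub hloc ha hs (Ioo_subset_Icc_self ht)
      _ ≤ |(s - t) * deriv v t| + ε * |s - t| := by
          have := abs_sub_abs_le_abs_sub (v s - v t) ((s - t) * deriv v t)
          simp only [Real.norm_eq_abs, smul_eq_mul] at hlin
          linarith
      _ = (|deriv v t| + ε) * |s - t| := by rw [abs_mul]; ring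
  · have hlength : v b - v a = (eVariationOn c (Icc a b)).toReal := by
      simp only [v, variationOnFromTo.self, variationOnFromTo.eq_of_le c _ hab, inter_self,
        sub_zero]
    calc ∫⁻ t in Ioo a b, ENNReal.ofReal |deriv v t| = ∫⁻ t in Ioo a b, ‖deriv v t‖ₑ := by
          simp only [Real.enorm_eq_ofReal_abs]
      _ ≤ ENNReal.ofReal (v b - v a) := lintegral_enorm_deriv_le_of_monotoneOn hab hv
      _ = eVariationOn c (Icc a b) := by rw [hlength, ENNReal.ofReal_toReal hc]

lemma exists_common_hasSpeedLE_lintegral_le {c c' : ℝ → Y} {a b : ℝ} (hab : a ≤ b)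
    (hc : BoundedVariationOn c (Icc a b)) (hc' : BoundedVariationOn c' (Icc a b)) :
    ∃ q : ℝ → ℝ, Measurable q ∧ (∀ t, 0 ≤ q t) ∧
      (∀ᵐ t, t ∈ Ioo a b → HasSpeedLE c (q t) t ∧ HasSpeedLE c' (q t) t) ∧
      ∫⁻ t in Ioo a b, ENNReal.ofReal (q t) ≤
        eVariationOn c (Icc a b) + eVariationOn c' (Icc a b) := by
  obtain ⟨q, hqm, hq0, hq, hqle⟩ := exists_hasSpeedLE_lintegral_le hab hc
  obtain ⟨q', hqm', hq0', hq', hqle'⟩ := exists_hasSpeedLE_lintegral_le hab hc'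
  refine ⟨q + q', hqm.add hqm', fun t => add_nonneg (hq0 t) (hq0' t), ?_, ?_⟩
  · filter_upwards [hq, hq'] with t ht ht' hmem
    exact ⟨(ht hmem).mono (le_add_of_nonneg_right (hq0' t)),
      (ht' hmem).mono (le_add_of_nonneg_left (hq0 t))⟩
  · simp only [Pi.add_apply, ENNReal.ofReal_add (hq0 _) (hq0' _)]
    rw [lintegral_add_left (by fun_prop)]
    exact add_le_add hqle hqle'

lemma eVariationOn_Icc_le_of_lipschitzOnWith {c : ℝ → Y} {K : ℝ≥0} {a b : ℝ}
    (h : LipschitzOnWith K c (Icc a b)) :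
    eVariationOn c (Icc a b) ≤ K * ENNReal.ofReal (b - a) := by
  simpa only [Function.comp_id, eVariationOn_id_Icc] using
    h.comp_eVariationOn_le (g := id) (mapsTo_id _)

lemma boundedVariationOn_Icc_of_lipschitzOnWith {c : ℝ → Y} {K : ℝ≥0} {a b : ℝ}
    (h : LipschitzOnWith K c (Icc a b)) : BoundedVariationOn c (Icc a b) :=
  ne_top_of_le_ne_top (ENNReal.mul_ne_top ENNReal.coe_ne_top ENNReal.ofReal_ne_top)
    (eVariationOn_Icc_le_of_lipschitzOnWith h)

lemma eVariationOn_comp_le_of_lipschitzWith {Z : Type*} [PseudoMetricSpace Z] {f : Y → Z}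
    (hf : LipschitzWith 1 f) (c : ℝ → Y) (S : Set ℝ) :
    eVariationOn (f ∘ c) S ≤ eVariationOn c S := by
  simpa only [ENNReal.coe_one, one_mul] using
    (hf.lipschitzOnWith (s := univ)).comp_eVariationOn_le (mapsTo_univ c S)

lemma lipschitzOnWith_Icc_union {c : ℝ → Y} {K : ℝ≥0} {a m b : ℝ}
    (h₁ : LipschitzOnWith K c (Icc a m)) (h₂ : LipschitzOnWith K c (Icc m b)) :
    LipschitzOnWith K c (Icc a b) := by
  refine LipschitzOnWith.of_dist_le_mul fun s hs t ht => ?_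
  wlog hst : s ≤ t generalizing s t
  · rw [dist_comm, dist_comm s]
    exact this t ht s hs (le_of_not_ge hst)
  rcases le_total t m with htm | hmt
  · exact h₁.dist_le_mul s ⟨hs.1, hst.trans htm⟩ t ⟨ht.1, htm⟩
  rcases le_total m s with hms | hsm
  · exact h₂.dist_le_mul s ⟨hms, hs.2⟩ t ⟨hmt, ht.2⟩
  calc dist (c s) (c t) ≤ dist (c s) (c m) + dist (c m) (c t) := dist_triangle _ _ _
    _ ≤ K * dist s m + K * dist m t :=
        add_le_add (h₁.dist_le_mul s ⟨hs.1, hsm⟩ m ⟨hs.1.trans hsm, le_rfl⟩)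
          (h₂.dist_le_mul m ⟨le_rfl, hmt.trans ht.2⟩ t ⟨hmt, ht.2⟩)
    _ = K * dist s t := by
        rw [Real.dist_eq, Real.dist_eq, Real.dist_eq, abs_of_nonpos (sub_nonpos.2 hsm),
          abs_of_nonpos (sub_nonpos.2 hmt), abs_of_nonpos (sub_nonpos.2 hst)]
        ring

/-- A `K`-Lipschitz loop parametrized by the angle `θ ∈ [-π, π]`, the range of `Complex.arg`. -/
structure AngularLoop (K : ℝ≥0) (c : ℝ → Y) : Prop where
  lipschitzOnWith : LipschitzOnWith K c (Icc (-Real.pi) Real.pi)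
  closed : c (-Real.pi) = c Real.pi

lemma norm_exp_mul_I_sub_exp_mul_I (a b : ℝ) :
    ‖Complex.exp (a * Complex.I) - Complex.exp (b * Complex.I)‖ = 2 * |Real.sin ((a - b) / 2)| := by
  have hfactor : Complex.exp (a * Complex.I) - Complex.exp (b * Complex.I) =
      Complex.exp (b * Complex.I) * (Complex.exp (Complex.I * (a - b : ℝ)) - 1) := by
    rw [mul_sub, ← Complex.exp_add, mul_one]
    push_cast
    ring_nf
  rw [hfactor, norm_mul, Complex.norm_exp_ofReal_mul_I, one_mul,
    Complex.norm_exp_I_mul_ofReal_sub_one, norm_mul, Real.norm_two, Real.norm_eq_abs]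

/-- Go around the loop the short way; then `sin x ≥ 2 x / π` compares arc and chord. -/
lemma AngularLoop.dist_le {c : ℝ → Y} {K : ℝ≥0} (hc : AngularLoop K c) {a b : ℝ}
    (ha : a ∈ Icc (-Real.pi) Real.pi) (hb : b ∈ Icc (-Real.pi) Real.pi) :
    dist (c a) (c b) ≤
      K * (Real.pi / 2 * ‖Complex.exp (a * Complex.I) - Complex.exp (b * Complex.I)‖) := by
  wlog hab : b ≤ a generalizing a b
  · rw [dist_comm, norm_sub_rev]
    exact this hb ha (le_of_not_ge hab)
  have hpi := Real.pi_pos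
  set x := (a - b) / 2 with hx
  have hx0 : 0 ≤ x := by linarith
  have hxpi : x ≤ Real.pi := by linarith [ha.2, hb.1]
  have hle {y : ℝ} (hy0 : 0 ≤ y) (hy : y ≤ Real.pi / 2) :
      2 * y ≤ Real.pi / 2 * (2 * Real.sin y) := by
    have := Real.mul_le_sin hy0 hy
    calc 2 * y = Real.pi / 2 * (2 * (2 / Real.pi * y)) := by field_simp
      _ ≤ _ := by gcongr
  rw [norm_exp_mul_I_sub_exp_mul_I, ← hx,
    abs_of_nonneg (Real.sin_nonneg_of_nonneg_of_le_pi hx0 hxpi)]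
  rcases le_total x (Real.pi / 2) with hx2 | hx2
  · refine (hc.lipschitzOnWith.dist_le_mul a ha b hb).trans ?_
    rw [Real.dist_eq, abs_of_nonneg (sub_nonneg.2 hab)]
    have := hle hx0 hx2
    gcongr
    linarith
  · have hapi := hc.lipschitzOnWith.dist_le_mul a ha Real.pi ⟨by linarith, le_rfl⟩
    have hbpi := hc.lipschitzOnWith.dist_le_mul (-Real.pi) ⟨le_rfl, by linarith⟩ b hb
    rw [Real.dist_eq, abs_of_nonpos (by linarith [ha.2])] at hapi
    rw [Real.dist_eq, abs_of_nonpos (by linarith [hb.1]), hc.closed] at hbpi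
    have hsin := hle (sub_nonneg.2 hxpi) (by linarith)
    rw [Real.sin_pi_sub] at hsin
    calc dist (c a) (c b) ≤ dist (c a) (c Real.pi) + dist (c Real.pi) (c b) := dist_triangle _ _ _
      _ ≤ K * -(a - Real.pi) + K * -(-Real.pi - b) := add_le_add hapi hbpi
      _ = K * (2 * (Real.pi - x)) := by rw [hx]; ring
      _ ≤ _ := by gcongr

lemma AngularLoop.comp {Z : Type*} [PseudoMetricSpace Z] {f : Y → Z} (hf : LipschitzWith 1 f)
    {c : ℝ → Y} {K : ℝ≥0} (hc : AngularLoop K c) : AngularLoop K (f ∘ c) where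
  lipschitzOnWith := by simpa only [one_mul] using hf.comp_lipschitzOnWith hc.lipschitzOnWith
  closed := congrArg f hc.closed

lemma AngularLoop.eVariationOn_ne_top {c : ℝ → Y} {K : ℝ≥0} (hc : AngularLoop K c) :
    eVariationOn c (Icc (-Real.pi) Real.pi) ≠ ⊤ :=
  boundedVariationOn_Icc_of_lipschitzOnWith hc.lipschitzOnWith

lemma AngularLoop.sub {E : Type*} [SeminormedAddCommGroup E] {c c' : ℝ → E} {K K' : ℝ≥0}
    (hc : AngularLoop K c) (hc' : AngularLoop K' c') : AngularLoop (K + K') (c - c') where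
  lipschitzOnWith := hc.lipschitzOnWith.sub hc'.lipschitzOnWith
  closed := by rw [Pi.sub_apply, Pi.sub_apply, hc.closed, hc'.closed]

lemma arg_mem_Icc (z : ℂ) : Complex.arg z ∈ Icc (-Real.pi) Real.pi :=
  Ioc_subset_Icc_self (Complex.arg_mem_Ioc z)

lemma AngularLoop.apply_arg_exp {Z : Type*} [MetricSpace Z] {c : ℝ → Z} {K : ℝ≥0}
    (hc : AngularLoop K c) {θ : ℝ} (hθ : θ ∈ Icc (-Real.pi) Real.pi) :
    c (Complex.arg (Complex.exp (θ * Complex.I))) = c θ := by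
  have hexp : Complex.exp (Complex.arg (Complex.exp (θ * Complex.I)) * Complex.I) =
      Complex.exp (θ * Complex.I) := by
    simpa only [Complex.norm_exp_ofReal_mul_I, Complex.ofReal_one, one_mul] using
      Complex.norm_mul_exp_arg_mul_I (Complex.exp (θ * Complex.I))
  have := hc.dist_le (arg_mem_Icc (Complex.exp (θ * Complex.I))) hθ
  rw [hexp, sub_self, norm_zero, mul_zero, mul_zero] at this
  exact dist_le_zero.1 this

end Curves

section RadialRetraction

variable {V : Type*} [NormedAddCommGroup V] [NormedSpace ℝ V]

/-- The radial retraction of a normed space onto the closed ball of radius `r > 0`. -/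
noncomputable def radialRetraction (r : ℝ) (z : V) : V := (r / max r ‖z‖) • z

lemma radialRetraction_of_norm_le {r : ℝ} (hr : 0 < r) {z : V} (hz : ‖z‖ ≤ r) :
    radialRetraction r z = z := by
  rw [radialRetraction, max_eq_left hz, div_self hr.ne', one_smul]

lemma radialRetraction_of_le_norm {r : ℝ} {z : V} (hz : r ≤ ‖z‖) :
    radialRetraction r z = (r / ‖z‖) • z := by
  rw [radialRetraction, max_eq_right hz]

lemma norm_radialRetraction_le {r : ℝ} (hr : 0 < r) (z : V) : ‖radialRetraction r z‖ ≤ r := by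
  have hmax : 0 < max r ‖z‖ := hr.trans_le (le_max_left _ _)
  rw [radialRetraction, norm_smul, Real.norm_of_nonneg (by positivity), div_mul_eq_mul_div,
    div_le_iff₀ hmax]
  gcongr
  exact le_max_right _ _

lemma lipschitzWith_radialRetraction {r : ℝ} (hr : 0 < r) :
    LipschitzWith 2 (radialRetraction r : V → V) := by
  refine LipschitzWith.of_dist_le_mul fun z w => ?_
  set m := max r ‖z‖ with hm
  set n := max r ‖w‖ with hn
  have hrm : r ≤ m := le_max_left _ _
  have hm0 : 0 < m := hr.trans_le hrm
  have hn0 : 0 < n := hr.trans_le (le_max_left _ _)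
  have hwn : ‖w‖ ≤ n := le_max_right _ _
  have hnm : |n - m| ≤ ‖z - w‖ := by
    rw [norm_sub_rev, hn, hm, max_comm r, max_comm r]
    exact (abs_max_sub_max_le_abs _ _ _).trans (abs_norm_sub_norm_le w z)
  have hscale : |r / m - r / n| * ‖w‖ ≤ |n - m| := by
    have : r / m - r / n = (r / m) * ((n - m) / n) := by field_simp
    calc |r / m - r / n| * ‖w‖ = (r / m) * |n - m| * (‖w‖ / n) := by
          rw [this, abs_mul, abs_div (n - m), abs_of_pos (div_pos hr hm0), abs_of_pos hn0]
          ring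
      _ ≤ 1 * |n - m| * 1 := by
          gcongr
          · exact (div_le_one hm0).2 hrm
          · exact (div_le_one hn0).2 hwn
      _ = |n - m| := by ring
  calc dist (radialRetraction r z) (radialRetraction r w)
      = ‖(r / m) • (z - w) + (r / m - r / n) • w‖ := by
        rw [dist_eq_norm, radialRetraction, radialRetraction]
        congr 1
        module
    _ ≤ r / m * ‖z - w‖ + |r / m - r / n| * ‖w‖ := by
        refine (norm_add_le _ _).trans_eq ?_
        rw [norm_smul, norm_smul, Real.norm_of_nonneg (div_pos hr hm0).le, Real.norm_eq_abs]
    _ ≤ 1 * ‖z - w‖ + ‖z - w‖ := by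
        gcongr
        · exact (div_le_one hm0).2 hrm
        · exact hscale.trans hnm
    _ = (2 : ℝ≥0) * dist z w := by rw [dist_eq_norm, NNReal.coe_ofNat]; ring

end RadialRetraction

section Collar

open Set Topology Metric Complex

variable {E : Type*} [NormedAddCommGroup E] [NormedSpace ℝ E]

/-- The extension of a loop to the plane that is positively homogeneous of degree one. -/
noncomputable def cone (c : ℝ → E) (z : ℂ) : E := ‖z‖ • c (arg z)

lemma norm_mul_norm_exp_arg_sub_le (z w : ℂ) :
    ‖w‖ * ‖exp (arg z * I) - exp (arg w * I)‖ ≤ 2 * ‖z - w‖ := by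
  have hsplit : (‖w‖ : ℂ) * (exp (arg z * I) - exp (arg w * I)) =
      (‖w‖ - ‖z‖ : ℝ) * exp (arg z * I) + (z - w) := by
    push_cast
    linear_combination norm_mul_exp_arg_mul_I z - norm_mul_exp_arg_mul_I w
  calc ‖w‖ * ‖exp (arg z * I) - exp (arg w * I)‖
      = ‖(‖w‖ : ℂ) * (exp (arg z * I) - exp (arg w * I))‖ := by
        rw [norm_mul, norm_real, norm_norm]
    _ ≤ |‖w‖ - ‖z‖| + ‖z - w‖ := by
        rw [hsplit]
        refine (norm_add_le _ _).trans_eq ?_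
        rw [norm_mul, norm_exp_ofReal_mul_I, mul_one, norm_real, Real.norm_eq_abs]
    _ ≤ 2 * ‖z - w‖ := by
        have := abs_norm_sub_norm_le w z
        rw [norm_sub_rev] at this
        linarith

lemma AngularLoop.exists_lipschitzWith_cone {c : ℝ → E} {K : ℝ≥0} (hc : AngularLoop K c) :
    ∃ M, LipschitzWith M (cone c) := by
  obtain ⟨D, hD⟩ := isCompact_Icc.exists_bound_of_continuousOn hc.lipschitzOnWith.continuousOn
  have hDarg (z : ℂ) : ‖c (arg z)‖ ≤ D := hD _ (arg_mem_Icc z)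
  refine ⟨(D + K * Real.pi).toNNReal, LipschitzWith.of_dist_le' fun z w => ?_⟩
  calc dist (cone c z) (cone c w)
      = ‖(‖z‖ - ‖w‖) • c (arg z) + ‖w‖ • (c (arg z) - c (arg w))‖ := by
        rw [dist_eq_norm, cone, cone]
        congr 1
        module
    _ ≤ |‖z‖ - ‖w‖| * ‖c (arg z)‖ + ‖w‖ * dist (c (arg z)) (c (arg w)) := by
        refine (norm_add_le _ _).trans_eq ?_
        rw [norm_smul, norm_smul, norm_norm, Real.norm_eq_abs, dist_eq_norm]
    _ ≤ ‖z - w‖ * D +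
          ‖w‖ * (K * (Real.pi / 2 * ‖exp (arg z * I) - exp (arg w * I)‖)) := by
        gcongr
        · exact abs_norm_sub_norm_le z w
        · exact hDarg z
        · exact hc.dist_le (arg_mem_Icc z) (arg_mem_Icc w)
    _ = ‖z - w‖ * D +
          K * (Real.pi / 2) * (‖w‖ * ‖exp (arg z * I) - exp (arg w * I)‖) := by ring
    _ ≤ ‖z - w‖ * D + K * (Real.pi / 2) * (2 * ‖z - w‖) := by
        gcongr _ + _ * ?_
        exact norm_mul_norm_exp_arg_sub_le z w
    _ = (D + K * Real.pi) * dist z w := by rw [dist_eq_norm]; ring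

/-- The disc `Φ`, shrunk to radius `1/2` and surrounded by a collar in which the boundary loop
moves along straight segments by `Δ`. A formula without case distinction makes it Lipschitz. -/
noncomputable def collar (Φ : ℂ → E) (Δ : ℝ → E) (z : ℂ) : E :=
  Φ ((2 : ℝ) • radialRetraction (1 / 2) z) +
    (2 : ℝ) • (cone Δ z - cone Δ (radialRetraction (1 / 2) z))

lemma collar_of_norm_le_half (Φ : ℂ → E) (Δ : ℝ → E) {z : ℂ} (hz : ‖z‖ ≤ 1 / 2) :
    collar Φ Δ z = Φ ((2 : ℝ) • z) := by
  rw [collar, radialRetraction_of_norm_le one_half_pos hz, sub_self, smul_zero, add_zero]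

lemma collar_of_half_le_norm (Φ : ℂ → E) (Δ : ℝ → E) {z : ℂ} (hz : 1 / 2 ≤ ‖z‖) :
    collar Φ Δ z = Φ (exp (arg z * I)) + (2 * ‖z‖ - 1) • Δ (arg z) := by
  have hz0 : 0 < ‖z‖ := one_half_pos.trans_le hz
  have hr : 0 < 1 / 2 / ‖z‖ := by positivity
  have hproj : radialRetraction (1 / 2) z = ((1 / 2 / ‖z‖ : ℝ) : ℂ) * z := by
    rw [radialRetraction_of_le_norm hz, real_smul]
  have hcone : cone Δ (radialRetraction (1 / 2) z) = (1 / 2 : ℝ) • Δ (arg z) := by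
    rw [cone, hproj, arg_real_mul _ hr, norm_mul, norm_real, Real.norm_of_nonneg hr.le,
      div_mul_cancel₀ _ hz0.ne']
  have hdouble : (2 : ℝ) • radialRetraction (1 / 2) z = exp (arg z * I) := by
    have hzC : (‖z‖ : ℂ) ≠ 0 := ofReal_ne_zero.2 hz0.ne'
    rw [hproj, real_smul]
    push_cast
    field_simp
    exact (norm_mul_exp_arg_mul_I z).symm
  rw [collar, hcone, hdouble, cone]
  module

lemma exists_lipschitzWith_collar {Φ : ℂ → E} {Δ : ℝ → E} {K M : ℝ≥0}
    (hΦ : LipschitzOnWith M Φ (closedBall 0 1)) (hΔ : AngularLoop K Δ) :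
    ∃ M', LipschitzWith M' (collar Φ Δ) := by
  obtain ⟨N, hN⟩ := hΔ.exists_lipschitzWith_cone
  have hP : LipschitzWith 2 (radialRetraction (1 / 2) : ℂ → ℂ) :=
    lipschitzWith_radialRetraction one_half_pos
  have hmaps : MapsTo (fun z : ℂ => (2 : ℝ) • radialRetraction (1 / 2) z) univ
      (closedBall 0 1) := fun z _ => by
    have := norm_radialRetraction_le one_half_pos z
    rw [mem_closedBall_zero_iff, norm_smul, Real.norm_of_nonneg two_pos.le]
    linarith
  have hinner := lipschitzOnWith_univ.1
    (hΦ.comp ((lipschitzWith_smul (2 : ℝ)).comp hP).lipschitzOnWith hmaps)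
  exact ⟨_, hinner.add ((lipschitzWith_smul (2 : ℝ)).comp (hN.sub (hN.comp hP)))⟩

lemma area_collar_closedBall_half (Φ : ℂ → E) (Δ : ℝ → E) :
    area (collar Φ Δ) (closedBall 0 (1 / 2)) = area Φ (closedBall 0 1) := by
  let L : ℂ ≃L[ℝ] ℂ := ContinuousLinearEquiv.smulLeft (Units.mk0 (2 : ℝ) two_ne_zero)
  have hL (z : ℂ) : L z = (2 : ℝ) • z := rfl
  have hpre : L ⁻¹' closedBall 0 1 = closedBall 0 (1 / 2) := by
    ext z
    rw [mem_preimage, hL, mem_closedBall_zero_iff, mem_closedBall_zero_iff, norm_smul,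
      Real.norm_of_nonneg two_pos.le, le_div_iff₀' two_pos]
  rw [← area_comp_continuousLinearEquiv Φ L, hpre, area, area]
  refine setLIntegral_congr_fun_ae measurableSet_closedBall ?_
  filter_upwards [measure_eq_zero_iff_ae_notMem.1
    (Measure.addHaar_sphere (volume : Measure ℂ) 0 (1 / 2))] with z hsphere hball
  refine jacobian_congr ?_
  filter_upwards [isOpen_ball.mem_nhds ((mem_closedBall.1 hball).lt_of_ne hsphere)] with w hw
  rw [collar_of_norm_le_half Φ Δ (mem_ball_zero_iff.1 hw).le, Function.comp_apply, hL]

lemma jacobian_collar_le {Φ : ℂ → E} {Γ Γ' : ℝ → E}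
    (hΦ : ∀ θ ∈ Icc (-Real.pi) Real.pi, Φ (exp (θ * I)) = Γ' θ) {z : ℂ} (hz : z ∈ slitPlane)
    (hnorm : ‖z‖ ∈ Ioo (1 / 2 : ℝ) 1) {q : ℝ} (hq : 0 ≤ q) (hΓ : HasSpeedLE Γ q (arg z))
    (hΓ' : HasSpeedLE Γ' q (arg z)) :
    jacobian (collar Φ (Γ - Γ')) z ≤
      ENNReal.ofReal (Real.pi * q * (2 * dist (Γ (arg z)) (Γ' (arg z))) / ‖z‖) := by
  refine jacobian_le_of_polar hz hq (by positivity) fun ε hε => ?_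
  have harg : Tendsto arg (𝓝 z) (𝓝 (arg z)) := (continuousAt_arg hz).tendsto
  filter_upwards [harg.eventually (hΓ ε hε), harg.eventually (hΓ' ε hε),
    (continuous_norm.tendsto z).eventually (isOpen_Ioo.mem_nhds hnorm)] with w hw hw' hwnorm
  rw [dist_eq_norm] at hw hw'
  have hcollar {x : ℂ} (hx : ‖x‖ ∈ Ioo (1 / 2 : ℝ) 1) :
      collar Φ (Γ - Γ') x = Γ' (arg x) + (2 * ‖x‖ - 1) • (Γ (arg x) - Γ' (arg x)) := by
    rw [collar_of_half_le_norm _ _ hx.1.le, hΦ _ (arg_mem_Icc x), Pi.sub_apply]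
  have hs : 0 ≤ 2 - 2 * ‖w‖ := by linarith [hwnorm.2]
  have ht : 0 ≤ 2 * ‖w‖ - 1 := by linarith [hwnorm.1]
  calc dist (collar Φ (Γ - Γ') w) (collar Φ (Γ - Γ') z)
      = ‖(2 - 2 * ‖w‖) • (Γ' (arg w) - Γ' (arg z)) + (2 * ‖w‖ - 1) • (Γ (arg w) - Γ (arg z)) +
          (2 * (‖w‖ - ‖z‖)) • (Γ (arg z) - Γ' (arg z))‖ := by
        rw [dist_eq_norm, hcollar hwnorm, hcollar hnorm]
        congr 1
        module
    _ ≤ (2 - 2 * ‖w‖) * ‖Γ' (arg w) - Γ' (arg z)‖ + (2 * ‖w‖ - 1) * ‖Γ (arg w) - Γ (arg z)‖ +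
          2 * |‖w‖ - ‖z‖| * dist (Γ (arg z)) (Γ' (arg z)) := by
        refine (norm_add₃_le ..).trans_eq ?_
        rw [norm_smul, norm_smul, norm_smul, Real.norm_of_nonneg hs, Real.norm_of_nonneg ht,
          Real.norm_eq_abs, abs_mul, abs_two, dist_eq_norm]
    _ ≤ (2 - 2 * ‖w‖) * ((q + ε) * |arg w - arg z|) +
          (2 * ‖w‖ - 1) * ((q + ε) * |arg w - arg z|) +
          2 * |‖w‖ - ‖z‖| * dist (Γ (arg z)) (Γ' (arg z)) := by gcongr
    _ = (q + ε) * |arg w - arg z| +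
          2 * dist (Γ (arg z)) (Γ' (arg z)) * |‖w‖ - ‖z‖| := by ring

lemma area_collar_annulus_le {Φ : ℂ → E} {Γ Γ' : ℝ → E}
    (hΦ : ∀ θ ∈ Icc (-Real.pi) Real.pi, Φ (exp (θ * I)) = Γ' θ) {h : ℝ → ℝ≥0∞}
    (hh : Measurable h)
    (hspeed : ∀ᵐ t, t ∈ Ioo (-Real.pi) Real.pi → ∃ q, 0 ≤ q ∧ HasSpeedLE Γ q t ∧
      HasSpeedLE Γ' q t ∧ ENNReal.ofReal (dist (Γ t) (Γ' t) * q) ≤ h t) :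
    area (collar Φ (Γ - Γ')) (closedBall 0 1 \ closedBall 0 (1 / 2)) ≤
      ENNReal.ofReal Real.pi * ∫⁻ t in Ioo (-Real.pi) Real.pi, h t := by
  have hannulus : area (collar Φ (Γ - Γ')) (closedBall 0 1 \ closedBall 0 (1 / 2)) ≤
      ENNReal.ofReal (1 - 1 / 2) *
        ∫⁻ t in Ioo (-Real.pi) Real.pi, ENNReal.ofReal (2 * Real.pi) * h t := by
    refine setLIntegral_annulus_le (hh.const_mul _) ?_
    filter_upwards [hspeed] with θ hθ hθmem z hz harg hznorm
    obtain ⟨q, hq, hqΓ, hqΓ', hle⟩ := hθ hθmem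
    subst harg
    have hz0 : 0 < ‖z‖ := one_half_pos.trans hznorm.1
    calc ENNReal.ofReal ‖z‖ * jacobian (collar Φ (Γ - Γ')) z
        ≤ ENNReal.ofReal ‖z‖ *
            ENNReal.ofReal (Real.pi * q * (2 * dist (Γ (arg z)) (Γ' (arg z))) / ‖z‖) := by
          gcongr
          exact jacobian_collar_le hΦ hz hznorm hq hqΓ hqΓ'
      _ = ENNReal.ofReal (2 * Real.pi) * ENNReal.ofReal (dist (Γ (arg z)) (Γ' (arg z)) * q) := by
          rw [← ENNReal.ofReal_mul hz0.le, ← ENNReal.ofReal_mul Real.two_pi_pos.le]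
          congr 1
          field_simp
      _ ≤ ENNReal.ofReal (2 * Real.pi) * h (arg z) := by gcongr
  rwa [lintegral_const_mul _ hh, ← mul_assoc, ← ENNReal.ofReal_mul (by norm_num),
    show (1 - 1 / 2) * (2 * Real.pi) = Real.pi by ring] at hannulus

end Collar

section Filling

open Set Topology Metric Complex

variable {E : Type*} [NormedAddCommGroup E] [NormedSpace ℝ E]

/-- The loop `c`, parametrized by the angle `θ ∈ [-π, π]`, bounds a Lipschitz disc of area at most
`A`. The unit disc is taken in `ℂ`. -/
def HasFilling {Y : Type*} [PseudoMetricSpace Y] (c : ℝ → Y) (A : ℝ≥0∞) : Prop :=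
  ∃ Φ : ℂ → Y, (∃ K, LipschitzOnWith K Φ (closedBall 0 1)) ∧
    (∀ θ ∈ Icc (-Real.pi) Real.pi, Φ (exp (θ * I)) = c θ) ∧ area Φ (closedBall 0 1) ≤ A

namespace HasFilling

lemma mono {Y : Type*} [PseudoMetricSpace Y] {c : ℝ → Y} {A B : ℝ≥0∞} (h : HasFilling c A)
    (hAB : A ≤ B) : HasFilling c B := by
  obtain ⟨Φ, hΦ, hbdry, harea⟩ := h
  exact ⟨Φ, hΦ, hbdry, harea.trans hAB⟩

lemma const {Y : Type*} [PseudoMetricSpace Y] (y : Y) : HasFilling (fun _ => y) 0 :=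
  ⟨fun _ => y, ⟨0, (LipschitzWith.const y).lipschitzOnWith⟩, fun _ _ => rfl, (area_const y _).le⟩

lemma add_of_hasSpeedLE {Γ Γ' : ℝ → E} {K K' : ℝ≥0} {A : ℝ≥0∞} (hfill : HasFilling Γ' A)
    (hΓ : AngularLoop K Γ) (hΓ' : AngularLoop K' Γ') {h : ℝ → ℝ≥0∞} (hh : Measurable h)
    (hspeed : ∀ᵐ t, t ∈ Ioo (-Real.pi) Real.pi → ∃ q, 0 ≤ q ∧ HasSpeedLE Γ q t ∧
      HasSpeedLE Γ' q t ∧ ENNReal.ofReal (dist (Γ t) (Γ' t) * q) ≤ h t) :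
    HasFilling Γ (A + ENNReal.ofReal Real.pi * ∫⁻ t in Ioo (-Real.pi) Real.pi, h t) := by
  obtain ⟨Φ, ⟨M, hM⟩, hbdry, harea⟩ := hfill
  obtain ⟨M', hM'⟩ := exists_lipschitzWith_collar hM (hΓ.sub hΓ')
  refine ⟨collar Φ (Γ - Γ'), ⟨M', hM'.lipschitzOnWith⟩, fun θ hθ => ?_, ?_⟩
  · have hnorm : ‖exp (θ * I)‖ = 1 := norm_exp_ofReal_mul_I θ
    rw [collar_of_half_le_norm _ _ (by rw [hnorm]; exact one_half_lt_one.le), hnorm,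
      (hΓ.sub hΓ').apply_arg_exp hθ, hbdry _ (arg_mem_Icc _), hΓ'.apply_arg_exp hθ, Pi.sub_apply]
    module
  rw [area, ← lintegral_inter_add_sdiff _ _ measurableSet_closedBall (B := closedBall 0 (1 / 2)),
    inter_eq_right.2 (closedBall_subset_closedBall one_half_lt_one.le)]
  exact add_le_add ((area_collar_closedBall_half Φ (Γ - Γ')).trans_le harea)
    (area_collar_annulus_le hbdry hh hspeed)

/-- The straight homotopy from `Γ'` to `Γ` sweeps out the additional area. -/
lemma add_of_eqOn_diff {Γ Γ' : ℝ → E} {K K' : ℝ≥0} {A : ℝ≥0∞} (hfill : HasFilling Γ' A)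
    (hΓ : AngularLoop K Γ) (hΓ' : AngularLoop K' Γ') {a b D : ℝ} (hab : a ≤ b)
    (hsub : Icc a b ⊆ Icc (-Real.pi) Real.pi)
    (heq : EqOn Γ Γ' (Icc (-Real.pi) Real.pi \ Icc a b))
    (hD : ∀ t ∈ Icc a b, dist (Γ t) (Γ' t) ≤ D) :
    HasFilling Γ (A + ENNReal.ofReal (Real.pi * D) *
      (eVariationOn Γ (Icc a b) + eVariationOn Γ' (Icc a b))) := by
  obtain ⟨q, hqm, hq0, hq, hqle⟩ := exists_common_hasSpeedLE_lintegral_le hab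
    (boundedVariationOn_Icc_of_lipschitzOnWith (hΓ.lipschitzOnWith.mono hsub))
    (boundedVariationOn_Icc_of_lipschitzOnWith (hΓ'.lipschitzOnWith.mono hsub))
  have hD0 : 0 ≤ D := dist_nonneg.trans (hD a ⟨le_rfl, hab⟩)
  let h : ℝ → ℝ≥0∞ := (Ioo a b).indicator fun t => ENNReal.ofReal D * ENNReal.ofReal (q t)
  have hm : Measurable h := Measurable.indicator (by fun_prop) measurableSet_Ioo
  refine (hfill.add_of_hasSpeedLE hΓ hΓ' hm ?_).mono ?_
  · filter_upwards [hq, compl_mem_ae_iff.2 (measure_singleton a),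
      compl_mem_ae_iff.2 (measure_singleton b)] with t ht hta htb htpi
    by_cases hmem : t ∈ Icc a b
    · have hmem' : t ∈ Ioo a b := ⟨hmem.1.lt_of_ne' hta, hmem.2.lt_of_ne htb⟩
      refine ⟨q t, hq0 t, (ht hmem').1, (ht hmem').2, ?_⟩
      rw [show h t = _ from indicator_of_mem hmem' _, ← ENNReal.ofReal_mul hD0]
      exact ENNReal.ofReal_le_ofReal (mul_le_mul_of_nonneg_right (hD t hmem) (hq0 t))
    · have hnhds := Icc_mem_nhds htpi.1 htpi.2
      refine ⟨K + K', by positivity,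
        (hasSpeedLE_of_lipschitzOnWith hΓ.lipschitzOnWith hnhds).mono
          (le_add_of_nonneg_right K'.coe_nonneg),
        (hasSpeedLE_of_lipschitzOnWith hΓ'.lipschitzOnWith hnhds).mono
          (le_add_of_nonneg_left K.coe_nonneg), ?_⟩
      rw [heq ⟨Ioo_subset_Icc_self htpi, hmem⟩, dist_self, zero_mul, ENNReal.ofReal_zero]
      exact zero_le
  · rw [ENNReal.ofReal_mul Real.pi_pos.le, mul_assoc]
    gcongr
    calc ∫⁻ t in Ioo (-Real.pi) Real.pi, h t ≤ ∫⁻ t, h t := setLIntegral_le_lintegral _ _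
      _ = ENNReal.ofReal D * ∫⁻ t in Ioo a b, ENNReal.ofReal (q t) := by
        rw [lintegral_indicator measurableSet_Ioo, lintegral_const_mul _ (by fun_prop)]
      _ ≤ _ := by gcongr

/-- The identification `ℝ × ℝ ≃ ℂ` is composed with `z ↦ -z`, because `γ` starts at angle `0`
and `c` at angle `-π`. -/
lemma exists_boundsLoop {Y : Type u} [PseudoMetricSpace Y] {c γ : ℝ → Y} {A : ℝ≥0∞}
    (h : HasFilling c A) (hA : A ≠ ⊤)
    (hγ : ∀ s ∈ Icc (0 : ℝ) 1, γ s = c (2 * Real.pi * s - Real.pi)) :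
    ∃ φ : ℝ × ℝ → Y, BoundsLoop φ γ ∧ lipArea φ ≤ A.toReal := by
  obtain ⟨Φ, ⟨K, hΦ⟩, hbdry, harea⟩ := h
  let L : (ℝ × ℝ) ≃L[ℝ] ℂ := equivRealProdCLM.symm.trans (ContinuousLinearEquiv.neg ℝ)
  have hL (p : ℝ × ℝ) : L p = -(p.1 + p.2 * I) := congrArg Neg.neg (mk_eq_add_mul_I p.1 p.2)
  have hpre : L ⁻¹' closedBall 0 1 = D2 := by
    ext p
    rw [mem_preimage, mem_closedBall_zero_iff, hL, norm_neg, norm_add_mul_I, Real.sqrt_le_one]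
    rfl
  have harea' : area (Φ ∘ L) D2 ≤ A := by
    rw [← hpre, area_comp_continuousLinearEquiv]
    exact harea
  refine ⟨Φ ∘ L, ⟨⟨_, hΦ.comp L.lipschitz.lipschitzOnWith ?_⟩, fun s hs => ?_⟩, ?_⟩
  · rw [← hpre]
    exact mapsTo_preimage _ _
  · have hpi := Real.pi_pos
    have hangle : 2 * Real.pi * s - Real.pi ∈ Icc (-Real.pi) Real.pi := by
      constructor <;> nlinarith [hs.1, hs.2]
    rw [hγ s hs, ← hbdry _ hangle, Function.comp_apply, hL]
    congr 1
    push_cast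
    rw [sub_mul, exp_sub, exp_pi_mul_I, div_neg, div_one, exp_mul_I]
  · exact (lipArea_le_toReal_area (ne_top_of_le_ne_top hA harea')).trans
      (ENNReal.toReal_mono hA harea')

end HasFilling

end Filling

section Geodesics

open Set Topology

variable {X : Type u} [MetricSpace X]

namespace IsGeodesicSeg

variable {x y : X} {g : ℝ → X}

lemma dist_left (hg : IsGeodesicSeg x y g) {t : ℝ} (ht : t ∈ Icc 0 (dist x y)) :
    dist x (g t) = t := by
  have := hg.2.2 0 (left_mem_Icc.2 dist_nonneg) t ht
  rwa [hg.1, zero_sub, abs_neg, abs_of_nonneg ht.1] at this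

lemma dist_right (hg : IsGeodesicSeg x y g) {t : ℝ} (ht : t ∈ Icc 0 (dist x y)) :
    dist (g t) y = dist x y - t := by
  have := hg.2.2 t ht _ (right_mem_Icc.2 dist_nonneg)
  rwa [hg.2.1, abs_sub_comm, abs_of_nonneg (sub_nonneg.2 ht.2)] at this

lemma dist_add_dist (hg : IsGeodesicSeg x y g) {p : X} (hp : p ∈ g '' Icc 0 (dist x y)) :
    dist x p + dist p y = dist x y := by
  obtain ⟨t, ht, rfl⟩ := hp
  rw [hg.dist_left ht, hg.dist_right ht, add_sub_cancel]

end IsGeodesicSeg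

lemma GeodesicSpace.exists_lipschitzOnWith_Icc (hX : GeodesicSpace X) (x y : X) {a b : ℝ}
    (hab : a < b) :
    ∃ σ : ℝ → X, σ a = x ∧ σ b = y ∧
      LipschitzOnWith (dist x y / (b - a)).toNNReal σ (Icc a b) := by
  obtain ⟨g, hg⟩ := hX x y
  have hba : 0 < b - a := sub_pos.2 hab
  have hmem {t : ℝ} (ht : t ∈ Icc a b) :
      dist x y / (b - a) * (t - a) ∈ Icc 0 (dist x y) := by
    refine ⟨mul_nonneg (by positivity) (sub_nonneg.2 ht.1), ?_⟩
    rw [div_mul_eq_mul_div, div_le_iff₀ hba]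
    gcongr
    exact ht.2
  refine ⟨fun t => g (dist x y / (b - a) * (t - a)), ?_, ?_, ?_⟩
  · simp only [sub_self, mul_zero, hg.1]
  · simp only [div_mul_cancel₀ _ hba.ne', hg.2.1]
  · refine LipschitzOnWith.of_dist_le' fun s hs t ht => ?_
    rw [hg.2.2 _ (hmem hs) _ (hmem ht), ← mul_sub, sub_sub_sub_cancel_right, abs_mul,
      abs_of_nonneg (by positivity), Real.dist_eq]

end Geodesics

section Hyperbolic

open Set

variable {X : Type u} [MetricSpace X] {δ : ℝ}

/-- Every geodesic triangle in `X` is `δ`-slim. -/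
def SlimTriangles (X : Type u) [MetricSpace X] (δ : ℝ) : Prop :=
  ∀ x y z : X, ∀ gxy gyz gzx : ℝ → X,
    IsGeodesicSeg x y gxy → IsGeodesicSeg y z gyz → IsGeodesicSeg z x gzx →
    ∀ s ∈ Icc (0 : ℝ) (dist x y),
      ∃ p ∈ gyz '' Icc (0 : ℝ) (dist y z) ∪ gzx '' Icc (0 : ℝ) (dist z x), dist (gxy s) p ≤ δ

namespace SlimTriangles

lemma dist_midpoint_le (hδ : SlimTriangles X δ) (hX : GeodesicSpace X) {y z : X} {g : ℝ → X}
    (hg : IsGeodesicSeg y z g) {q : X} {M : ℝ} (hy : dist q y ≤ M) (hz : dist q z ≤ M) :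
    dist q (g (dist y z / 2)) ≤ M - dist y z / 2 + 2 * δ := by
  have hmid : dist y z / 2 ∈ Icc 0 (dist y z) :=
    ⟨by positivity, half_le_self dist_nonneg⟩
  have hleft := hg.dist_left hmid
  have hright := hg.dist_right hmid
  set w := g (dist y z / 2)
  obtain ⟨g₁, hg₁⟩ := hX z q
  obtain ⟨g₂, hg₂⟩ := hX q y
  obtain ⟨u, hu, hwu⟩ := hδ y z q g g₁ g₂ hg hg₁ hg₂ _ hmid
  have hqw := dist_triangle_right q w u
  rcases hu with hu | hu
  · have hsplit := hg₁.dist_add_dist hu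
    have := dist_triangle w u z
    rw [dist_comm z u, dist_comm u q, dist_comm z q] at hsplit
    linarith
  · have hsplit := hg₂.dist_add_dist hu
    have := dist_triangle_right y w u
    rw [dist_comm u y] at hsplit
    linarith

/-- Compare `p` and `x` with the midpoint of `y` and `z`. -/
lemma dist_le_of_dist_le_of_farthest (hδ : SlimTriangles X δ) (hX : GeodesicSpace X)
    {p x y z : X} {k : ℝ} (hpy : dist p y ≤ dist p x) (hpz : dist p z ≤ dist p x)
    (hxy : dist x y ≤ k) (hxz : dist x z ≤ k) : dist y z ≤ k + 4 * δ := by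
  obtain ⟨g, hg⟩ := hX y z
  have hp := hδ.dist_midpoint_le hX hg hpy hpz
  have hx := hδ.dist_midpoint_le hX hg hxy hxz
  have := dist_triangle_right p x (g (dist y z / 2))
  linarith

end SlimTriangles

end Hyperbolic

section Arcs

open Set

variable {Y : Type*}

/-- The angular curves `c` and `c'` differ at most on the arc over the open interval `(a, b)`. -/
structure ArcReplacement (c c' : ℝ → Y) (a b : ℝ) : Prop where
  neg_pi_le : -Real.pi ≤ a
  lt : a < b
  le_pi : b ≤ Real.pi
  eqOn_left : EqOn c c' (Icc (-Real.pi) a)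
  eqOn_right : EqOn c c' (Icc b Real.pi)

namespace ArcReplacement

variable {c c' : ℝ → Y} {a b : ℝ}

lemma Icc_subset (h : ArcReplacement c c' a b) : Icc a b ⊆ Icc (-Real.pi) Real.pi :=
  Icc_subset_Icc h.neg_pi_le h.le_pi

lemma eqOn_diff (h : ArcReplacement c c' a b) :
    EqOn c c' (Icc (-Real.pi) Real.pi \ Icc a b) := fun t ht => by
  rcases lt_or_ge t a with hta | hat
  · exact h.eqOn_left ⟨ht.1.1, hta.le⟩
  · exact h.eqOn_right ⟨le_of_not_ge fun htb => ht.2 ⟨hat, htb⟩, ht.1.2⟩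

end ArcReplacement

variable [PseudoMetricSpace Y]

lemma eVariationOn_Icc_add_Icc (c : ℝ → Y) {a m b : ℝ} (ham : a ≤ m) (hmb : m ≤ b) :
    eVariationOn c (Icc a m) + eVariationOn c (Icc m b) = eVariationOn c (Icc a b) := by
  simpa only [univ_inter] using eVariationOn.Icc_add_Icc c ham hmb (mem_univ m)

lemma toReal_eVariationOn_Icc_sub {c : ℝ → Y} {l s t : ℝ} (hc : BoundedVariationOn c (Icc l t))
    (hls : l ≤ s) (hst : s ≤ t) :
    (eVariationOn c (Icc l t)).toReal - (eVariationOn c (Icc l s)).toReal =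
      (eVariationOn c (Icc s t)).toReal := by
  rw [← eVariationOn_Icc_add_Icc c hls hst, ENNReal.toReal_add, add_sub_cancel_left]
  · exact hc.mono (Icc_subset_Icc_right hst)
  · exact hc.mono (Icc_subset_Icc_left hls)

lemma lipschitzOnWith_toReal_eVariationOn_Icc {c : ℝ → Y} {K : ℝ≥0} {l r : ℝ}
    (hc : LipschitzOnWith K c (Icc l r)) :
    LipschitzOnWith K (fun t => (eVariationOn c (Icc l t)).toReal) (Icc l r) := by
  refine LipschitzOnWith.of_dist_le_mul fun t ht s hs => ?_
  wlog hst : s ≤ t generalizing s t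
  · rw [dist_comm, dist_comm t]
    exact this s hs t ht (le_of_not_ge hst)
  have hct := hc.mono (Icc_subset_Icc_right ht.2)
  rw [Real.dist_eq, Real.dist_eq, toReal_eVariationOn_Icc_sub
    (boundedVariationOn_Icc_of_lipschitzOnWith hct) hs.1 hst, ENNReal.abs_toReal,
    abs_of_nonneg (sub_nonneg.2 hst)]
  refine ENNReal.toReal_le_of_le_ofReal (mul_nonneg K.coe_nonneg (sub_nonneg.2 hst)) ?_
  rw [ENNReal.ofReal_mul K.coe_nonneg, ENNReal.ofReal_coe_nnreal]
  exact eVariationOn_Icc_le_of_lipschitzOnWith (hct.mono (Icc_subset_Icc_left hs.1))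

lemma exists_eVariationOn_Icc_eq {c : ℝ → Y} {K : ℝ≥0} {l m r k : ℝ}
    (hc : LipschitzOnWith K c (Icc l r)) (hm : m ∈ Icc l r) (hk : 0 ≤ k)
    (hleft : ENNReal.ofReal k ≤ eVariationOn c (Icc l m))
    (hright : ENNReal.ofReal k ≤ eVariationOn c (Icc m r)) :
    ∃ a ∈ Icc l m, ∃ b ∈ Icc m r, eVariationOn c (Icc a m) = ENNReal.ofReal k ∧
      eVariationOn c (Icc m b) = ENNReal.ofReal k := by
  have hcont := (lipschitzOnWith_toReal_eVariationOn_Icc hc).continuousOn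
  have hfin := boundedVariationOn_Icc_of_lipschitzOnWith hc
  have hsub {s t : ℝ} (hs : l ≤ s) (hst : s ≤ t) (ht : t ≤ r) :=
    toReal_eVariationOn_Icc_sub (hfin.mono (Icc_subset_Icc_right ht)) hs hst
  have hfin' {s t : ℝ} (hs : l ≤ s) (ht : t ≤ r) : eVariationOn c (Icc s t) ≠ ⊤ :=
    hfin.mono (Icc_subset_Icc hs ht)
  have hleft' := (ENNReal.ofReal_le_iff_le_toReal (hfin' le_rfl hm.2)).1 hleft
  have hright' := (ENNReal.ofReal_le_iff_le_toReal (hfin' hm.1 le_rfl)).1 hright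
  obtain ⟨a, ha, hak⟩ := intermediate_value_Icc hm.1 (hcont.mono (Icc_subset_Icc_right hm.2))
    (show (eVariationOn c (Icc l m)).toReal - k ∈ _ from
      ⟨by linarith [hsub le_rfl hm.1 hm.2], by linarith⟩)
  obtain ⟨b, hb, hbk⟩ := intermediate_value_Icc hm.2 (hcont.mono (Icc_subset_Icc_left hm.1))
    (show (eVariationOn c (Icc l m)).toReal + k ∈ _ from
      ⟨by linarith, by linarith [hsub hm.1 hm.2 le_rfl]⟩)
  refine ⟨a, ha, b, hb, ?_, ?_⟩
  · rw [← ENNReal.ofReal_toReal (hfin' ha.1 hm.2), ← hsub ha.1 ha.2 hm.2]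
    congr 1
    linarith
  · rw [← ENNReal.ofReal_toReal (hfin' hm.1 hb.2), ← hsub hm.1 hb.1 hb.2]
    congr 1
    linarith

namespace ArcReplacement

variable {c c' : ℝ → Y} {a b : ℝ}

lemma eVariationOn_add_add (h : ArcReplacement c c' a b) :
    eVariationOn c' (Icc (-Real.pi) Real.pi) + eVariationOn c (Icc a b) =
      eVariationOn c (Icc (-Real.pi) Real.pi) + eVariationOn c' (Icc a b) := by
  have hsplit (f : ℝ → Y) : eVariationOn f (Icc (-Real.pi) Real.pi) =
      eVariationOn f (Icc (-Real.pi) a) + eVariationOn f (Icc a b) +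
        eVariationOn f (Icc b Real.pi) := by
    rw [eVariationOn_Icc_add_Icc f h.neg_pi_le h.lt.le,
      eVariationOn_Icc_add_Icc f (h.neg_pi_le.trans h.lt.le) h.le_pi]
  rw [hsplit c, hsplit c', eVariationOn.congr h.eqOn_left, eVariationOn.congr h.eqOn_right]
  ring

lemma eVariationOn_add_one_le (h : ArcReplacement c c' a b)
    (hfin : eVariationOn c (Icc a b) ≠ ⊤)
    (hshort : eVariationOn c' (Icc a b) + 1 ≤ eVariationOn c (Icc a b)) :
    eVariationOn c' (Icc (-Real.pi) Real.pi) + 1 ≤ eVariationOn c (Icc (-Real.pi) Real.pi) := by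
  refine (ENNReal.add_le_add_iff_right hfin).1 ?_
  rw [add_right_comm, h.eVariationOn_add_add, add_assoc]
  gcongr

lemma edist_le (h : ArcReplacement c c' a b) {t : ℝ} (ht : t ∈ Icc a b) :
    edist (c t) (c' t) ≤ eVariationOn c (Icc a b) + eVariationOn c' (Icc a b) := by
  have ha : a ∈ Icc a b := left_mem_Icc.2 h.lt.le
  refine (edist_triangle _ (c a) _).trans (add_le_add (eVariationOn.edist_le c ht ha) ?_)
  rw [h.eqOn_left ⟨h.neg_pi_le, le_rfl⟩]
  exact eVariationOn.edist_le c' ha ht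

end ArcReplacement

lemma lipschitzOnWith_of_eqOn {c c' : ℝ → Y} {K : ℝ≥0} {s : Set ℝ} (hc : LipschitzOnWith K c s)
    (h : EqOn c' c s) : LipschitzOnWith K c' s := fun x hx y hy => by
  rw [h hx, h hy]
  exact hc hx hy

lemma AngularLoop.exists_geodesic_arcReplacement {X : Type u} [MetricSpace X]
    (hX : GeodesicSpace X) {c : ℝ → X} {K : ℝ≥0} (hc : AngularLoop K c) {a b : ℝ}
    (ha : -Real.pi ≤ a) (hab : a < b) (hb : b ≤ Real.pi) :
    ∃ c' K', AngularLoop K' c' ∧ ArcReplacement c c' a b ∧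
      eVariationOn c' (Icc a b) ≤ edist (c a) (c b) := by
  obtain ⟨σ, hσa, hσb, hσ⟩ := hX.exists_lipschitzOnWith_Icc (c a) (c b) hab
  set L := (dist (c a) (c b) / (b - a)).toNNReal
  classical
  set c' := (Icc a b).piecewise σ c with hc'
  have hmid : EqOn c' σ (Icc a b) := piecewise_eqOn _ _ _
  have hleft : EqOn c c' (Icc (-Real.pi) a) := fun t ht => by
    rcases ht.2.eq_or_lt with rfl | hta
    · rw [hmid ⟨le_rfl, hab.le⟩, hσa]
    · exact (piecewise_eq_of_notMem _ _ _ fun h => hta.not_ge h.1).symm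
  have hright : EqOn c c' (Icc b Real.pi) := fun t ht => by
    rcases ht.1.eq_or_lt with rfl | hbt
    · rw [hmid ⟨hab.le, le_rfl⟩, hσb]
    · exact (piecewise_eq_of_notMem _ _ _ fun h => hbt.not_ge h.2).symm
  have hlip : LipschitzOnWith (max K L) c' (Icc (-Real.pi) Real.pi) := by
    refine lipschitzOnWith_Icc_union (m := a) ?_ (lipschitzOnWith_Icc_union (m := b) ?_ ?_)
    · exact lipschitzOnWith_of_eqOn ((hc.lipschitzOnWith.mono
        (Icc_subset_Icc_right (hab.le.trans hb))).weaken (le_max_left _ _)) hleft.symm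
    · exact lipschitzOnWith_of_eqOn (hσ.weaken (le_max_right _ _)) hmid
    · exact lipschitzOnWith_of_eqOn ((hc.lipschitzOnWith.mono
        (Icc_subset_Icc_left (ha.trans hab.le))).weaken (le_max_left _ _)) hright.symm
  refine ⟨c', max K L, ⟨hlip, ?_⟩, ⟨ha, hab, hb, hleft, hright⟩, ?_⟩
  · rw [← hleft ⟨le_rfl, ha⟩, ← hright ⟨hb, le_rfl⟩, hc.closed]
  · calc eVariationOn c' (Icc a b) = eVariationOn σ (Icc a b) := eVariationOn.congr hmid
      _ ≤ L * ENNReal.ofReal (b - a) := eVariationOn_Icc_le_of_lipschitzOnWith hσ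
      _ = edist (c a) (c b) := by
        have hba : 0 < b - a := sub_pos.2 hab
        rw [edist_dist, ENNReal.ofNNReal_toNNReal, ← ENNReal.ofReal_mul (by positivity),
          div_mul_cancel₀ _ hba.ne']

end Arcs

section Shortcut

open Set

variable {X : Type u} [MetricSpace X] {δ : ℝ}

/-- Cut off the point `m` of the loop farthest from its base point: hyperbolicity brings the two
points at arc length `k` from `m` within distance `k + 4 δ` of each other. -/
lemma AngularLoop.exists_arc_dist_le (hX : GeodesicSpace X) (hδ : SlimTriangles X δ)
    {c : ℝ → X} {K : ℝ≥0} (hc : AngularLoop K c) {k t : ℝ} (hk : 0 < k)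
    (ht : t ∈ Icc (-Real.pi) Real.pi) (hfar : k ≤ dist (c (-Real.pi)) (c t)) :
    ∃ a b, -Real.pi ≤ a ∧ a < b ∧ b ≤ Real.pi ∧
      eVariationOn c (Icc a b) = ENNReal.ofReal (2 * k) ∧ dist (c a) (c b) ≤ k + 4 * δ := by
  obtain ⟨m, hm, hmax⟩ : ∃ m ∈ Icc (-Real.pi) Real.pi, ∀ s ∈ Icc (-Real.pi) Real.pi,
      dist (c (-Real.pi)) (c s) ≤ dist (c (-Real.pi)) (c m) :=
    isCompact_Icc.exists_isMaxOn ⟨t, ht⟩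
      ((continuous_const.dist continuous_id).comp_continuousOn hc.lipschitzOnWith.continuousOn)
  have hfar' : ENNReal.ofReal k ≤ edist (c (-Real.pi)) (c m) := by
    rw [edist_dist]
    exact ENNReal.ofReal_le_ofReal (hfar.trans (hmax t ht))
  have hleft : ENNReal.ofReal k ≤ eVariationOn c (Icc (-Real.pi) m) :=
    hfar'.trans (eVariationOn.edist_le c ⟨le_rfl, hm.1⟩ ⟨hm.1, le_rfl⟩)
  have hright : ENNReal.ofReal k ≤ eVariationOn c (Icc m Real.pi) := by
    rw [hc.closed] at hfar'
    exact hfar'.trans (eVariationOn.edist_le c ⟨hm.2, le_rfl⟩ ⟨le_rfl, hm.2⟩)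
  obtain ⟨a, ha, b, hb, hlena, hlenb⟩ :=
    exists_eVariationOn_Icc_eq hc.lipschitzOnWith hm hk.le hleft hright
  have hlen : eVariationOn c (Icc a b) = ENNReal.ofReal (2 * k) := by
    rw [← eVariationOn_Icc_add_Icc c ha.2 hb.1, hlena, hlenb, ← ENNReal.ofReal_add hk.le hk.le,
      two_mul]
  have hma : dist (c m) (c a) ≤ k := (edist_le_ofReal hk.le).1
    ((eVariationOn.edist_le c (right_mem_Icc.2 ha.2) (left_mem_Icc.2 ha.2)).trans_eq hlena)
  have hmb : dist (c m) (c b) ≤ k := (edist_le_ofReal hk.le).1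
    ((eVariationOn.edist_le c (left_mem_Icc.2 hb.1) (right_mem_Icc.2 hb.1)).trans_eq hlenb)
  refine ⟨a, b, ha.1, (ha.2.trans hb.1).lt_of_ne ?_, hb.2, hlen,
    hδ.dist_le_of_dist_le_of_farthest hX (hmax a ⟨ha.1, ha.2.trans hm.2⟩)
      (hmax b ⟨hm.1.trans hb.1, hb.2⟩) hma hmb⟩
  rintro rfl
  rw [Icc_self, eVariationOn.subsingleton c subsingleton_singleton, eq_comm,
    ENNReal.ofReal_eq_zero] at hlen
  linarith

/-- With `k = 4 δ + 1`, an arc of length `2 k` is replaced by a geodesic of length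
`k + 4 δ = 2 k - 1`. -/
lemma AngularLoop.exists_shortcut (hX : GeodesicSpace X) (hδ : SlimTriangles X δ) (hδ0 : 0 ≤ δ)
    {c : ℝ → X} {K : ℝ≥0} (hc : AngularLoop K c) {t : ℝ} (ht : t ∈ Icc (-Real.pi) Real.pi)
    (hfar : 4 * δ + 1 ≤ dist (c (-Real.pi)) (c t)) :
    ∃ c' K' a b, AngularLoop K' c' ∧ ArcReplacement c c' a b ∧
      eVariationOn c (Icc a b) = ENNReal.ofReal (2 * (4 * δ + 1)) ∧
      eVariationOn c' (Icc a b) + 1 ≤ eVariationOn c (Icc a b) := by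
  obtain ⟨a, b, ha, hab, hb, hlen, hshort⟩ :=
    hc.exists_arc_dist_le hX hδ (k := 4 * δ + 1) (by positivity) ht hfar
  obtain ⟨c', K', hc', hrep, hlen'⟩ := hc.exists_geodesic_arcReplacement hX ha hab hb
  refine ⟨c', K', a, b, hc', hrep, hlen, ?_⟩
  calc eVariationOn c' (Icc a b) + 1
      ≤ ENNReal.ofReal (4 * δ + 1 + 4 * δ) + ENNReal.ofReal 1 := by
        rw [ENNReal.ofReal_one]
        gcongr
        exact hlen'.trans ((edist_le_ofReal (by positivity)).2 hshort)
    _ = eVariationOn c (Icc a b) := by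
        rw [hlen, ← ENNReal.ofReal_add (by positivity) zero_le_one]
        congr 1
        ring

end Shortcut

section LinearFilling

open Set

variable {X : Type u} [MetricSpace X] {E : Type v} [NormedAddCommGroup E] [NormedSpace ℝ E]

lemma AngularLoop.hasFilling_of_dist_le {f : X → E} (hf : LipschitzWith 1 f) {c : ℝ → X} {K : ℝ≥0}
    (hc : AngularLoop K c) {D : ℝ}
    (hD : ∀ t ∈ Icc (-Real.pi) Real.pi, dist (c (-Real.pi)) (c t) ≤ D) :
    HasFilling (f ∘ c)
      (ENNReal.ofReal (Real.pi * D) * eVariationOn c (Icc (-Real.pi) Real.pi)) := by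
  have hconst : AngularLoop 0 fun _ : ℝ => f (c (-Real.pi)) :=
    ⟨(LipschitzWith.const _).lipschitzOnWith, rfl⟩
  have hdist (t : ℝ) (ht : t ∈ Icc (-Real.pi) Real.pi) :
      dist ((f ∘ c) t) (f (c (-Real.pi))) ≤ D := by
    rw [dist_comm]
    exact (hf.dist_le_mul _ _).trans (by simpa only [NNReal.coe_one, one_mul] using hD t ht)
  refine ((HasFilling.const (f (c (-Real.pi)))).add_of_eqOn_diff (hc.comp hf) hconst
    (neg_le_self Real.pi_pos.le) subset_rfl (fun t ht => absurd ht.1 ht.2) hdist).mono ?_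
  rw [zero_add, eVariationOn.constant_on
    (subsingleton_singleton.anti (image_subset_iff.2 fun _ _ => rfl)), add_zero]
  gcongr
  exact eVariationOn_comp_le_of_lipschitzWith hf c _

lemma ArcReplacement.hasFilling_comp {f : X → E} (hf : LipschitzWith 1 f) {c c' : ℝ → X}
    {K K' : ℝ≥0} (hc : AngularLoop K c) (hc' : AngularLoop K' c') {a b D : ℝ} {A : ℝ≥0∞}
    (h : ArcReplacement c c' a b) (hD : 0 ≤ D)
    (hlen : eVariationOn c (Icc a b) + eVariationOn c' (Icc a b) ≤ ENNReal.ofReal D)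
    (hfill : HasFilling (f ∘ c') A) :
    HasFilling (f ∘ c) (A + ENNReal.ofReal (Real.pi * D ^ 2)) := by
  have hdist (t : ℝ) (ht : t ∈ Icc a b) : dist ((f ∘ c) t) ((f ∘ c') t) ≤ D := by
    rw [← edist_le_ofReal hD]
    exact (hf.edist_le_mul _ _).trans
      (by simpa only [ENNReal.coe_one, one_mul] using (h.edist_le ht).trans hlen)
  refine (hfill.add_of_eqOn_diff (hc.comp hf) (hc'.comp hf) h.lt.le h.Icc_subset
    (fun t ht => congrArg f (h.eqOn_diff ht)) hdist).mono ?_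
  rw [pow_two, ← mul_assoc, ENNReal.ofReal_mul (p := Real.pi * D) (by positivity)]
  gcongr
  exact (add_le_add (eVariationOn_comp_le_of_lipschitzWith hf c _)
    (eVariationOn_comp_le_of_lipschitzWith hf c' _)).trans hlen

/-- Every shortcut decreases the length by at least one, at a bounded cost of area. -/
lemma AngularLoop.hasFilling_of_slimTriangles (hX : GeodesicSpace X) {δ : ℝ} (hδ0 : 0 ≤ δ)
    (hδ : SlimTriangles X δ) {f : X → E} (hf : LipschitzWith 1 f) {c : ℝ → X} {K : ℝ≥0}
    (hc : AngularLoop K c) :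
    HasFilling (f ∘ c) (ENNReal.ofReal (Real.pi * (4 * (4 * δ + 1)) ^ 2) *
      eVariationOn c (Icc (-Real.pi) Real.pi)) := by
  obtain ⟨n, hn⟩ := ENNReal.exists_nat_gt hc.eVariationOn_ne_top
  induction n generalizing c K with
  | zero => exact absurd hn (by simp)
  | succ n ih =>
    by_cases hnear : ∀ t ∈ Icc (-Real.pi) Real.pi, dist (c (-Real.pi)) (c t) ≤ 4 * δ + 1
    · refine (hc.hasFilling_of_dist_le hf hnear).mono ?_
      gcongr
      nlinarith
    push Not at hnear
    obtain ⟨t, ht, hfar⟩ := hnear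
    obtain ⟨c', K', a, b, hc', hrep, hlen, hshort⟩ := hc.exists_shortcut hX hδ hδ0 ht hfar.le
    have hdecrease :=
      hrep.eVariationOn_add_one_le (ne_of_eq_of_ne hlen ENNReal.ofReal_ne_top) hshort
    have hfill := ih hc' (by
      push_cast at hn
      exact (ENNReal.add_lt_add_iff_right ENNReal.one_ne_top).1 (hdecrease.trans_lt hn))
    have hsum : eVariationOn c (Icc a b) + eVariationOn c' (Icc a b) ≤
        ENNReal.ofReal (4 * (4 * δ + 1)) :=
      calc _ ≤ eVariationOn c (Icc a b) + eVariationOn c (Icc a b) := by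
            gcongr
            exact le_self_add.trans hshort
        _ = _ := by
            rw [hlen, ← ENNReal.ofReal_add (by positivity) (by positivity)]
            congr 1
            ring
    refine (hrep.hasFilling_comp hf hc hc' (by positivity) hsum hfill).mono ?_
    rw [← mul_add_one]
    gcongr

end LinearFilling

section Isoperimetric

open Set

lemma lipschitzWith_kuratowski {X : Type u} [MetricSpace X] (x₀ : X) :
    LipschitzWith 1 (kuratowski X x₀) := by
  refine LipschitzWith.of_dist_le_mul fun x y => ?_
  rw [NNReal.coe_one, one_mul, dist_eq_norm]
  refine lp.norm_le_of_forall_le dist_nonneg fun z => ?_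
  change |(dist x z - dist x₀ z) - (dist y z - dist x₀ z)| ≤ _
  rw [sub_sub_sub_cancel_right]
  exact abs_dist_sub_le x y z

lemma loopLength_le_of_lipschitzOnWith {X : Type u} [PseudoMetricSpace X] {γ : ℝ → X} {K : ℝ≥0}
    (hγ : LipschitzOnWith K γ (Icc 0 1)) : loopLength γ ≤ K :=
  ENNReal.toReal_le_of_le_ofReal K.coe_nonneg <| by
    simpa only [sub_zero, ENNReal.ofReal_one, mul_one, ENNReal.ofReal_coe_nnreal] using
      eVariationOn_Icc_le_of_lipschitzOnWith hγ

/-- The parameter in `[0, 1]` of the point at angle `t ∈ [-π, π]`. -/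
noncomputable def angleParam (t : ℝ) : ℝ := (t + Real.pi) / (2 * Real.pi)

lemma mapsTo_angleParam : MapsTo angleParam (Icc (-Real.pi) Real.pi) (Icc 0 1) := fun t ht => by
  have := Real.pi_pos
  refine ⟨div_nonneg (by linarith [ht.1]) (by positivity), (div_le_one (by positivity)).2 ?_⟩
  linarith [ht.2]

lemma angleParam_sub_pi (s : ℝ) : angleParam (2 * Real.pi * s - Real.pi) = s := by
  rw [angleParam, sub_add_cancel, mul_div_cancel_left₀ s (by positivity)]

lemma monotone_angleParam : Monotone angleParam := fun s t hst => by
  unfold angleParam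
  gcongr

lemma IsLipLoop.exists_angularLoop {X : Type u} [PseudoMetricSpace X] {γ : ℝ → X}
    (hγ : IsLipLoop γ) : ∃ K, AngularLoop K (γ ∘ angleParam) := by
  obtain ⟨⟨K, hK⟩, hclosed⟩ := hγ
  have hlip : LipschitzWith (2 * Real.pi)⁻¹.toNNReal angleParam :=
    LipschitzWith.of_dist_le_mul fun s t => by
      rw [Real.coe_toNNReal _ (by positivity), Real.dist_eq, Real.dist_eq, angleParam, angleParam,
        ← sub_div, add_sub_add_right_eq_sub, abs_div, abs_of_pos Real.two_pi_pos, div_eq_inv_mul]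
  refine ⟨_, hK.comp hlip.lipschitzOnWith mapsTo_angleParam, ?_⟩
  have h₀ := angleParam_sub_pi 0
  have h₁ := angleParam_sub_pi 1
  rw [mul_zero, zero_sub] at h₀
  rw [mul_one, two_mul, add_sub_cancel_right] at h₁
  rw [Function.comp_apply, Function.comp_apply, h₀, h₁, hclosed]

theorem hyperbolic_linear_isoperimetric_general {X : Type u} [MetricSpace X]
    (hX : GeodesicSpace X) (hhyp : GromovHyperbolic X) :
    ∃ C > (0:ℝ), ∀ (E : Type v) [NormedAddCommGroup E] [NormedSpace ℝ E] (f : X → E),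
      LipschitzWith 1 f → ∀ γ : ℝ → X, IsLipLoop γ →
        ∃ φ : ℝ × ℝ → E, BoundsLoop φ (f ∘ γ) ∧ lipArea φ ≤ C * loopLength γ := by
  obtain ⟨δ, hδ0, hδ⟩ := hhyp
  refine ⟨Real.pi * (4 * (4 * δ + 1)) ^ 2, by positivity, fun E _ _ f hf γ hγ => ?_⟩
  obtain ⟨K, hc⟩ := hγ.exists_angularLoop
  obtain ⟨⟨L, hL⟩, -⟩ := hγ
  have hlen : eVariationOn (γ ∘ angleParam) (Icc (-Real.pi) Real.pi) ≤ eVariationOn γ (Icc 0 1) :=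
    eVariationOn.comp_le_of_monotoneOn γ angleParam (monotone_angleParam.monotoneOn _)
      mapsTo_angleParam
  have hfin : eVariationOn γ (Icc 0 1) ≠ ⊤ := boundedVariationOn_Icc_of_lipschitzOnWith hL
  obtain ⟨φ, hφ, harea⟩ := ((hc.hasFilling_of_slimTriangles hX hδ0 hδ hf).mono
    (mul_le_mul_right hlen _)).exists_boundsLoop (ENNReal.mul_ne_top ENNReal.ofReal_ne_top hfin)
    (γ := f ∘ γ) fun s _ => congrArg (f ∘ γ) (angleParam_sub_pi s).symm
  refine ⟨φ, hφ, harea.trans_eq ?_⟩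
  rw [ENNReal.toReal_mul, ENNReal.toReal_ofReal (by positivity), loopLength]

end Isoperimetric

/-- a Gromov hyperbolic geodesic metric space `X` admits a linear
isoperimetric inequality in `L^∞(X)`: there is `C > 0` (depending only on `X`) such
that every loop `γ : [0,1] → X` with Lipschitz constant `Lγ` bounds a singular
Lipschitz disc of area at most `C·Lγ` in `L^∞(X)` (via the Kuratowski embedding). -/
theorem hyperbolic_linear_isoperimetric {X : Type u} [MetricSpace X] (x₀ : X)
    (hX : GeodesicSpace X) (hhyp : GromovHyperbolic X) :
    ∃ C > (0:ℝ), ∀ (γ : ℝ → X) (Lγ : ℝ≥0),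
      LipschitzOnWith Lγ γ (Set.Icc 0 1) → γ 0 = γ 1 →
      ∃ φ : ℝ × ℝ → Linfty X, BoundsLoop φ (fun s => kuratowski X x₀ (γ s)) ∧
        lipArea φ ≤ C * (Lγ : ℝ) := by
  obtain ⟨C, hC, hfill⟩ := hyperbolic_linear_isoperimetric_general hX hhyp
  refine ⟨C, hC, fun γ Lγ hγ hclosed => ?_⟩
  obtain ⟨φ, hφ, harea⟩ := hfill _ _ (lipschitzWith_kuratowski x₀) γ ⟨⟨Lγ, hγ⟩, hclosed⟩
  exact ⟨φ, hφ, harea.trans (by gcongr; exact loopLength_le_of_lipschitzOnWith hγ)⟩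

end SharpIsop
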